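/- arXiv:1812.10789 — 2 statements merged into one kernel-verified Lean document; each statement's English description precedes it below -/
import Mathlib

section
/- Let θ : A → A^ℓ be a substitution of constant length ℓ over a finite alphabet A with at least two letters, regarded as a map on the Besicovitch space [Σ] via θ([x]) = [θ(x)]. Then θ is a contraction on ([Σ],D_1) (i.e. there exists r < 1 with D_1(θ(x),θ(y)) ≤ r·D_1(x,y) for all x,y ∈ A^ℤ) if and only if c(θ) > 0. -/
open Filter Topology Set MeasureTheory
open scoped ENNReal

noncomputable section

/-- The upper density of a set of natural numbers. -/
def upperDensity (E : Set ℕ) : ℝ :=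
  Filter.limsup (fun n : ℕ =>
    (∑ k ∈ Finset.range n, E.indicator (fun _ => (1 : ℝ)) k) / n) Filter.atTop

/-- `S` is an `(f,δ,ν)`-separated subset of `X`, with respect to the distance `ρ`. -/
def IsSepSet {α : Type*} (ρ : α → α → ℝ) (f : α → α) (X : Set α) (δ ν : ℝ) (S : Set α) : Prop :=
  S ⊆ X ∧ ∀ x ∈ S, ∀ y ∈ S, x ≠ y → ν ≤ upperDensity {k : ℕ | δ ≤ ρ (f^[k] x) (f^[k] y)}

/-- The asymptotic separation number `Sep(f,δ,ν)` of `f` on `X`. -/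
def sepNum {α : Type*} (ρ : α → α → ℝ) (f : α → α) (X : Set α) (δ ν : ℝ) : ℕ∞ :=
  ⨆ (S : Set α) (_ : IsSepSet ρ f X δ ν S), S.encard

/-- The quantity `log s / (- log ν)`, with value `∞` if `s = ∞`. -/
def logRatio (s : ℕ∞) (ν : ℝ) : ℝ≥0∞ :=
  if s = ⊤ then ⊤ else ENNReal.ofReal (Real.log (s.toNat : ℝ) / (- Real.log ν))

/-- The lower amorphic complexity of `f` on `X`. -/
def acLower {α : Type*} (ρ : α → α → ℝ) (f : α → α) (X : Set α) : ℝ≥0∞ :=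
  ⨆ (δ : ℝ) (_ : 0 < δ),
    Filter.liminf (fun ν : ℝ => logRatio (sepNum ρ f X δ ν) ν) (𝓝[>] (0 : ℝ))

/-- The upper amorphic complexity of `f` on `X`. -/
def acUpper {α : Type*} (ρ : α → α → ℝ) (f : α → α) (X : Set α) : ℝ≥0∞ :=
  ⨆ (δ : ℝ) (_ : 0 < δ),
    Filter.limsup (fun ν : ℝ => logRatio (sepNum ρ f X δ ν) ν) (𝓝[>] (0 : ℝ))

/-- The left shift on `A^ℤ`. -/
def shift {A : Type*} (x : ℤ → A) : ℤ → A := fun n => x (n + 1)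

open scoped Classical in
/-- The Cantor metric `d(x,y) = 2^{-min{|k| : x_k ≠ y_k}}` on `A^ℤ`. -/
def cantorDist {A : Type*} (x y : ℤ → A) : ℝ :=
  if x = y then 0
  else (2 : ℝ) ^ (-((sInf {n : ℕ | ∃ k : ℤ, k.natAbs = n ∧ x k ≠ y k} : ℕ) : ℤ))

/-- The Besicovitch pseudometric `D_1` on `A^ℤ`. -/
def besD1 {A : Type*} (x y : ℤ → A) : ℝ :=
  upperDensity {k : ℕ | x (k : ℤ) ≠ y (k : ℤ)}

/-- The Besicovitch pseudometric `D_B` associated to a map `f` and a distance `ρ`. -/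
def besDB {α : Type*} (ρ : α → α → ℝ) (f : α → α) (x y : α) : ℝ :=
  Filter.limsup (fun n : ℕ => (∑ k ∈ Finset.range n, ρ (f^[k] x) (f^[k] y)) / n) Filter.atTop

/-- The pseudometric `D_δ` on `A^ℤ` associated to a metric `ρ` on `A^ℤ`. -/
def Ddelta {A : Type*} (ρ : (ℤ → A) → (ℤ → A) → ℝ) (δ : ℝ) (x y : ℤ → A) : ℝ :=
  upperDensity {k : ℕ | δ ≤ ρ (shift^[k] x) (shift^[k] y)}

/-- The closure of the two-sided shift orbit of `x₀`. -/
def orbitClosure {A : Type*} [TopologicalSpace A] (x₀ : ℤ → A) : Set (ℤ → A) :=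
  closure {y | ∃ k : ℤ, y = fun n => x₀ (n + k)}

/-- The extension of a constant length substitution `θ : A → A^ℓ` to `A^ℤ`,
via `θ(x)_{ℓk+i} = θ(x_k)_i`. -/
def substApply {A : Type*} {ℓ : ℕ} (hℓ : 0 < ℓ) (θ : A → Fin ℓ → A)
    (x : ℤ → A) : ℤ → A := fun n =>
  θ (x (n / (ℓ : ℤ))) ⟨(n % (ℓ : ℤ)).toNat, by
    have h1 : 0 ≤ n % (ℓ : ℤ) := Int.emod_nonneg n (by exact_mod_cast hℓ.ne')
    have h2 : n % (ℓ : ℤ) < (ℓ : ℤ) := Int.emod_lt_of_pos n (by exact_mod_cast hℓ)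
    omega⟩

/-- A constant length substitution is primitive if some power `θ^m` of it is such that
every letter `b` occurs in every word `θ^m(a)`. -/
def IsPrimitive {A : Type*} {ℓ : ℕ} (hℓ : 0 < ℓ) (θ : A → Fin ℓ → A) : Prop :=
  ∃ m : ℕ, 1 ≤ m ∧ ∀ a b : A, ∃ j : ℤ, 0 ≤ j ∧ j < (ℓ : ℤ) ^ m ∧
    (substApply hℓ θ)^[m] (fun _ => a) j = b

open scoped Classical in
/-- The number of positions at which the words `θ(a)` and `θ(b)` agree. -/
def coincCount {A : Type*} {ℓ : ℕ} (θ : A → Fin ℓ → A) (a b : A) : ℕ :=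
  (Finset.univ.filter (fun j : Fin ℓ => θ a j = θ b j)).card

/-- `c(θ)`, the minimum of `coincCount θ a b` over pairs `a ≠ b`. -/
def cMin {A : Type*} {ℓ : ℕ} (θ : A → Fin ℓ → A) : ℕ :=
  sInf {n : ℕ | ∃ a b : A, a ≠ b ∧ coincCount θ a b = n}

/-- `C(θ)`, the maximum of `coincCount θ a b` over pairs `a ≠ b`. -/
def cMax {A : Type*} {ℓ : ℕ} (θ : A → Fin ℓ → A) : ℕ :=
  sSup {n : ℕ | ∃ a b : A, a ≠ b ∧ coincCount θ a b = n}

/-- `S` is `ε`-separated with respect to the distance `ρ`. -/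
def IsEpsSeparated {α : Type*} (ρ : α → α → ℝ) (ε : ℝ) (S : Set α) : Prop :=
  ∀ x ∈ S, ∀ y ∈ S, x ≠ y → ε ≤ ρ x y

/-- `M_ε(E)`: the maximal cardinality of an `ε`-separated subset of `E`. -/
def packNum {α : Type*} (ρ : α → α → ℝ) (ε : ℝ) (E : Set α) : ℕ∞ :=
  ⨆ (S : Set α) (_ : S ⊆ E ∧ IsEpsSeparated ρ ε S), S.encard

/-- The lower box dimension of `E` with respect to the distance `ρ`. -/
def lowerBoxDim {α : Type*} (ρ : α → α → ℝ) (E : Set α) : ℝ≥0∞ :=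
  Filter.liminf (fun ε : ℝ => logRatio (packNum ρ ε E) ε) (𝓝[>] (0 : ℝ))

/-- The upper box dimension of `E` with respect to the distance `ρ`. -/
def upperBoxDim {α : Type*} (ρ : α → α → ℝ) (E : Set α) : ℝ≥0∞ :=
  Filter.limsup (fun ε : ℝ => logRatio (packNum ρ ε E) ε) (𝓝[>] (0 : ℝ))

/-- Mean equicontinuity of `f` on `X` with respect to the distance `ρ`. -/
def MeanEquicontinuousOn {α : Type*} (ρ : α → α → ℝ) (f : α → α) (X : Set α) : Prop :=
  ∀ ν : ℝ, 0 < ν → ∃ δ : ℝ, 0 < δ ∧ ∀ x ∈ X, ∀ y ∈ X, ρ x y < δ → besDB ρ f x y < ν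

/-- The subshift `X` has discrete spectrum: for every shift-invariant Borel probability
measure giving `X` full measure (there is exactly one for the systems under consideration),
`L²` has a Hilbert basis of eigenfunctions of the shift. -/
def HasDiscreteSpectrum {A : Type*} [MeasurableSpace A] (X : Set (ℤ → A)) : Prop :=
  ∀ μ : Measure (ℤ → A), IsProbabilityMeasure μ → MeasurePreserving shift μ μ → μ X = 1 →
    ∃ (ι : Type) (b : HilbertBasis ι ℂ (Lp ℂ 2 μ)), ∀ i : ι, ∃ c : ℂ,
      (fun z => (b i : Lp ℂ 2 μ) (shift z)) =ᵐ[μ] (fun z => c * (b i : Lp ℂ 2 μ) z)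

end

/-!
Along multiples of `ℓ`, the mismatches of `θ(x)` and `θ(y)` are counted word by word: the block over
`k` contributes the Hamming distance of `θ(x_k)` and `θ(y_k)`, which is at most `ℓ - c(θ)` and
vanishes when `x_k = y_k`. Since restricting to multiples of `ℓ` does not change the upper density,
`θ` is Lipschitz with constant `1 - c(θ)/ℓ`. Constant sequences over two letters realizing the
minimum `c(θ)` show that this constant is optimal, so `θ` is a contraction iff `1 - c(θ)/ℓ < 1`.
-/

lemma count_eq_card_fin {p : ℕ → Prop} [DecidablePred p] (n : ℕ) :
    Nat.count p n = Finset.card {i : Fin n | p i} := by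
  rw [Nat.count_eq_card_filter_range, Finset.card_filter, Finset.card_filter, Finset.sum_range]

section UpperDensity

/-- The proportion of elements of `E` among the first `n` natural numbers, whose upper limit is the
upper density of `E`. The value at `n = 0` is `0`. -/
noncomputable def initialDensity (E : Set ℕ) [DecidablePred (· ∈ E)] (n : ℕ) : ℝ :=
  (Nat.count (· ∈ E) n : ℝ) / n

variable (E : Set ℕ) [DecidablePred (· ∈ E)]

lemma initialDensity_nonneg (n : ℕ) : 0 ≤ initialDensity E n := by
  unfold initialDensity; positivity

lemma initialDensity_le_one (n : ℕ) : initialDensity E n ≤ 1 :=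
  div_le_one_of_le₀ (mod_cast Nat.count_le (· ∈ E)) n.cast_nonneg

lemma isBoundedUnder_le_initialDensity {ι : Type*} (l : Filter ι) (u : ι → ℕ) :
    l.IsBoundedUnder (· ≤ ·) fun i => initialDensity E (u i) :=
  isBoundedUnder_of ⟨1, fun i => initialDensity_le_one E (u i)⟩

lemma isBoundedUnder_ge_initialDensity {ι : Type*} (l : Filter ι) (u : ι → ℕ) :
    l.IsBoundedUnder (· ≥ ·) fun i => initialDensity E (u i) :=
  isBoundedUnder_of ⟨0, fun i => initialDensity_nonneg E (u i)⟩

lemma isCoboundedUnder_le_initialDensity {ι : Type*} (l : Filter ι) [l.NeBot] (u : ι → ℕ) :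
    l.IsCoboundedUnder (· ≤ ·) fun i => initialDensity E (u i) :=
  (isBoundedUnder_ge_initialDensity E l u).isCoboundedUnder_le

lemma upperDensity_eq_limsup_initialDensity :
    upperDensity E = limsup (initialDensity E) atTop := by
  unfold upperDensity initialDensity
  simp only [Set.indicator_apply, Finset.sum_boole, Nat.count_eq_card_filter_range]

variable {ℓ : ℕ}

lemma initialDensity_le_add_div (hℓ : 0 < ℓ) (n : ℕ) :
    initialDensity E n ≤ initialDensity E (ℓ * (n / ℓ)) + ℓ / n := by
  set m := ℓ * (n / ℓ) with hm
  have hcount : Nat.count (· ∈ E) n ≤ Nat.count (· ∈ E) m + ℓ := by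
    calc Nat.count (· ∈ E) n = Nat.count (· ∈ E) (m + n % ℓ) := by rw [hm, Nat.div_add_mod]
      _ ≤ Nat.count (· ∈ E) m + n % ℓ := by
        rw [Nat.count_add]
        exact Nat.add_le_add_left (Nat.count_le _) _
      _ ≤ Nat.count (· ∈ E) m + ℓ := Nat.add_le_add_left (Nat.mod_lt n hℓ).le _
  have hdiv : (Nat.count (· ∈ E) m : ℝ) / n ≤ initialDensity E m := by
    rcases Nat.eq_zero_or_pos m with h0 | hpos
    · simp [h0, initialDensity]
    · exact div_le_div_of_nonneg_left (Nat.cast_nonneg _) (mod_cast hpos)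
        (mod_cast Nat.mul_div_le n ℓ)
  calc initialDensity E n ≤ (Nat.count (· ∈ E) m + ℓ : ℝ) / n :=
        div_le_div_of_nonneg_right (mod_cast hcount) n.cast_nonneg
    _ = (Nat.count (· ∈ E) m : ℝ) / n + ℓ / n := add_div _ _ _
    _ ≤ initialDensity E m + ℓ / n := by gcongr

lemma upperDensity_eq_limsup_initialDensity_mul (hℓ : 0 < ℓ) :
    upperDensity E = limsup (fun q => initialDensity E (ℓ * q)) atTop := by
  rw [upperDensity_eq_limsup_initialDensity]
  apply le_antisymm
  · have hfloor : limsup (fun n => initialDensity E (ℓ * (n / ℓ))) atTop =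
        limsup (fun q => initialDensity E (ℓ * q)) atTop := by
      conv_rhs => rw [← map_div_atTop_eq_nat ℓ hℓ]
      rfl
    have herror : Tendsto (fun n : ℕ => (ℓ : ℝ) / n) atTop (𝓝 0) :=
      tendsto_const_div_atTop_nhds_zero_nat _
    calc limsup (initialDensity E) atTop
        ≤ limsup ((fun n => initialDensity E (ℓ * (n / ℓ))) + fun n : ℕ => (ℓ : ℝ) / n) atTop :=
          limsup_le_limsup (.of_forall fun n => initialDensity_le_add_div E hℓ n)
            (isCoboundedUnder_le_initialDensity E _ _)
            (isBoundedUnder_le_add (isBoundedUnder_le_initialDensity E _ _)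
              herror.isBoundedUnder_le)
      _ ≤ limsup (fun n => initialDensity E (ℓ * (n / ℓ))) atTop +
            limsup (fun n : ℕ => (ℓ : ℝ) / n) atTop :=
          limsup_add_le (isBoundedUnder_ge_initialDensity E _ _)
            (isBoundedUnder_le_initialDensity E _ _) herror.isCoboundedUnder_le
            herror.isBoundedUnder_le
      _ = limsup (fun q => initialDensity E (ℓ * q)) atTop := by
          rw [hfloor, herror.limsup_eq, add_zero]
  · have hmul : Tendsto (fun q : ℕ => ℓ * q) atTop atTop := tendsto_id.const_mul_atTop' hℓ
    exact limsup_le_limsup_of_le (f := map (fun q => ℓ * q) atTop) hmul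
      (isCoboundedUnder_le_initialDensity E _ _) (isBoundedUnder_le_initialDensity E _ _)

lemma upperDensity_le_mul_of_count_mul_le {E F : Set ℕ} [DecidablePred (· ∈ E)]
    [DecidablePred (· ∈ F)] (hℓ : 0 < ℓ) {r : ℝ} (hr : 0 ≤ r)
    (h : ∀ q, (Nat.count (· ∈ E) (ℓ * q) : ℝ) ≤ r * ℓ * Nat.count (· ∈ F) q) :
    upperDensity E ≤ r * upperDensity F := by
  have hℓ' : (0 : ℝ) < ℓ := mod_cast hℓ
  have hratio (q : ℕ) : initialDensity E (ℓ * q) ≤ r * initialDensity F q := by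
    calc initialDensity E (ℓ * q) ≤ r * ℓ * Nat.count (· ∈ F) q / (ℓ * q : ℕ) :=
          div_le_div_of_nonneg_right (h q) (Nat.cast_nonneg _)
      _ = r * initialDensity F q := by
          rw [initialDensity, Nat.cast_mul, mul_right_comm, mul_comm, mul_div_mul_left _ _ hℓ'.ne',
            mul_div_assoc]
  have hmono : Monotone (r * ·) := monotone_mul_left_of_nonneg hr
  have hbdd : IsBoundedUnder (· ≤ ·) atTop (initialDensity F) :=
    isBoundedUnder_le_initialDensity F _ id
  rw [upperDensity_eq_limsup_initialDensity_mul E hℓ, upperDensity_eq_limsup_initialDensity F,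
    hmono.map_limsup_of_continuousAt (initialDensity F) (by fun_prop) hbdd
      (isCoboundedUnder_le_initialDensity F _ id)]
  exact limsup_le_limsup (.of_forall hratio) (isCoboundedUnder_le_initialDensity E _ _)
    (hmono.isBoundedUnder_le_comp hbdd)

lemma upperDensity_eq_div_of_count_mul_eq {E : Set ℕ} [DecidablePred (· ∈ E)] (hℓ : 0 < ℓ) {m : ℕ}
    (h : ∀ q, Nat.count (· ∈ E) (ℓ * q) = m * q) : upperDensity E = m / ℓ := by
  rw [upperDensity_eq_limsup_initialDensity_mul E hℓ]
  refine (tendsto_const_nhds.congr' ?_).limsup_eq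
  filter_upwards [eventually_ne_atTop 0] with q hq
  rw [initialDensity, h, Nat.cast_mul, Nat.cast_mul, mul_div_mul_right _ _ (mod_cast hq)]

lemma upperDensity_univ : upperDensity Set.univ = 1 := by
  simpa using upperDensity_eq_div_of_count_mul_eq (E := Set.univ) one_pos (m := 1) (by simp)

end UpperDensity

section Coincidences

variable {A : Type*} {ℓ : ℕ} (θ : A → Fin ℓ → A)

lemma hammingDist_add_coincCount [DecidableEq A] (a b : A) :
    hammingDist (θ a) (θ b) + coincCount θ a b = ℓ := by
  rw [hammingDist, coincCount, add_comm]
  convert Finset.card_filter_add_card_filter_not (s := Finset.univ) fun j => θ a j = θ b j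
  exact (Finset.card_fin ℓ).symm

variable {θ} in
lemma cMin_le_coincCount {a b : A} (hab : a ≠ b) : cMin θ ≤ coincCount θ a b :=
  Nat.sInf_le ⟨a, b, hab, rfl⟩

lemma exists_coincCount_eq_cMin [Nontrivial A] :
    ∃ a b : A, a ≠ b ∧ coincCount θ a b = cMin θ := by
  obtain ⟨a, b, hab⟩ := exists_pair_ne A
  have hne : {n : ℕ | ∃ a b : A, a ≠ b ∧ coincCount θ a b = n}.Nonempty := ⟨_, a, b, hab, rfl⟩
  exact Nat.sInf_mem hne

end Coincidences

section Besicovitch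

variable {A : Type*} {ℓ : ℕ} (hℓ : 0 < ℓ) (θ : A → Fin ℓ → A)

lemma substApply_natCast_mul_add (x : ℤ → A) (q : ℕ) (i : Fin ℓ) :
    substApply hℓ θ x ((ℓ * q + i : ℕ) : ℤ) = θ (x q) i := by
  have hquot : ((ℓ * q + i : ℕ) : ℤ) / (ℓ : ℤ) = q := by
    rw [← Int.natCast_div, Nat.mul_add_div hℓ, Nat.div_eq_of_lt i.2, add_zero]
  have hrem : (((ℓ * q + i : ℕ) : ℤ) % (ℓ : ℤ)).toNat = i := by
    rw [← Int.natCast_mod, Int.toNat_natCast, Nat.mul_add_mod, Nat.mod_eq_of_lt i.2]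
  simp only [substApply, hquot, hrem]

lemma count_substApply_ne_mul [DecidableEq A] (x y : ℤ → A) (q : ℕ) :
    Nat.count (fun n : ℕ => substApply hℓ θ x n ≠ substApply hℓ θ y n) (ℓ * q) =
      ∑ k ∈ Finset.range q, hammingDist (θ (x k)) (θ (y k)) := by
  induction q with
  | zero => simp
  | succ q ih =>
    rw [Nat.mul_succ, Nat.count_add, ih, Finset.sum_range_succ, count_eq_card_fin, hammingDist]
    simp only [substApply_natCast_mul_add]

lemma besD1_substApply_le_mul [DecidableEq A] {r : ℝ} (hr : 0 ≤ r)
    (h : ∀ a b, a ≠ b → (hammingDist (θ a) (θ b) : ℝ) ≤ r * ℓ) (x y : ℤ → A) :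
    besD1 (substApply hℓ θ x) (substApply hℓ θ y) ≤ r * besD1 x y := by
  refine upperDensity_le_mul_of_count_mul_le hℓ hr fun q => ?_
  have hword (k : ℕ) : (hammingDist (θ (x k)) (θ (y k)) : ℝ) ≤
      r * ℓ * if x k ≠ y k then 1 else 0 := by
    split_ifs with hk
    · simpa using h _ _ hk
    · simp [not_not.mp hk]
  calc (Nat.count (· ∈ {n : ℕ | substApply hℓ θ x n ≠ substApply hℓ θ y n}) (ℓ * q) : ℝ)
      = ∑ k ∈ Finset.range q, (hammingDist (θ (x k)) (θ (y k)) : ℝ) :=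
        mod_cast count_substApply_ne_mul hℓ θ x y q
    _ ≤ ∑ k ∈ Finset.range q, r * ℓ * if x k ≠ y k then 1 else 0 :=
        Finset.sum_le_sum fun k _ => hword k
    _ = r * ℓ * Nat.count (· ∈ {k : ℕ | x k ≠ y k}) q := by
        rw [← Finset.mul_sum, Finset.sum_boole, Nat.count_eq_card_filter_range]
        rfl

lemma besD1_const_of_ne {a b : A} (hab : a ≠ b) : besD1 (fun _ => a) (fun _ => b) = 1 := by
  simpa [besD1, hab] using upperDensity_univ

lemma besD1_substApply_const [DecidableEq A] (a b : A) :
    besD1 (substApply hℓ θ fun _ => a) (substApply hℓ θ fun _ => b) =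
      hammingDist (θ a) (θ b) / ℓ := by
  refine upperDensity_eq_div_of_count_mul_eq hℓ fun q => ?_
  refine (count_substApply_ne_mul hℓ θ _ _ q).trans ?_
  rw [Finset.sum_const, Finset.card_range, smul_eq_mul, mul_comm]

theorem isLeast_besD1_substApply_le_mul [Nontrivial A] :
    IsLeast {r : ℝ | ∀ x y : ℤ → A,
      besD1 (substApply hℓ θ x) (substApply hℓ θ y) ≤ r * besD1 x y} (1 - cMin θ / ℓ) := by
  classical
  have hℓ' : (0 : ℝ) < ℓ := mod_cast hℓ
  have hdist (a b : A) : (hammingDist (θ a) (θ b) : ℝ) / ℓ = 1 - coincCount θ a b / ℓ := by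
    rw [eq_sub_iff_add_eq, ← add_div, div_eq_one_iff_eq hℓ'.ne']
    exact_mod_cast hammingDist_add_coincCount θ a b
  obtain ⟨a, b, hab, hmin⟩ := exists_coincCount_eq_cMin θ
  constructor
  · refine besD1_substApply_le_mul hℓ θ ?_ fun c d hcd => ?_
    · rw [← hmin, ← hdist]
      positivity
    · rw [← div_le_iff₀ hℓ', hdist]
      gcongr
      exact cMin_le_coincCount hcd
  · intro r hr
    calc 1 - (cMin θ : ℝ) / ℓ = hammingDist (θ a) (θ b) / ℓ := by rw [hdist, hmin]
      _ = besD1 (substApply hℓ θ fun _ => a) (substApply hℓ θ fun _ => b) :=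
        (besD1_substApply_const hℓ θ a b).symm
      _ ≤ r * besD1 (fun _ => a) (fun _ => b) := hr _ _
      _ = r := by rw [besD1_const_of_ne hab, mul_one]

end Besicovitch

theorem substitution_besicovitch_contraction_iff_general
    {A : Type*} [Nontrivial A] {ℓ : ℕ} (hℓ : 0 < ℓ) (θ : A → Fin ℓ → A) :
    (∃ r : ℝ, r < 1 ∧ ∀ x y : ℤ → A,
        besD1 (substApply hℓ θ x) (substApply hℓ θ y) ≤ r * besD1 x y) ↔
      0 < cMin θ := by
  have hℓ' : (0 : ℝ) < ℓ := mod_cast hℓ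
  calc (∃ r : ℝ, r < 1 ∧ ∀ x y : ℤ → A,
        besD1 (substApply hℓ θ x) (substApply hℓ θ y) ≤ r * besD1 x y)
      ↔ (1 : ℝ) - cMin θ / ℓ < 1 := by
        rw [isGLB_lt_iff (isLeast_besD1_substApply_le_mul hℓ θ).isGLB]
        exact exists_congr fun _ => and_comm
    _ ↔ 0 < cMin θ := by
        rw [sub_lt_self_iff, div_pos_iff_of_pos_right hℓ', Nat.cast_pos]

/-- A constant length substitution `θ`, acting on the Besicovitch
space `([Σ],D_1)`, is a contraction if and only if `c(θ) > 0`. -/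
theorem substitution_besicovitch_contraction_iff
    {A : Type} [Fintype A] (hA : ∃ a b : A, a ≠ b)
    {ℓ : ℕ} (hℓ : 0 < ℓ) (θ : A → Fin ℓ → A) :
    (∃ r : ℝ, r < 1 ∧ ∀ x y : ℤ → A,
        besD1 (substApply hℓ θ x) (substApply hℓ θ y) ≤ r * besD1 x y) ↔
      0 < cMin θ := by
  have : Nontrivial A := ⟨hA⟩
  exact substitution_besicovitch_contraction_iff_general hℓ θ
end

section
/- Let θ : A → A^ℓ be a primitive substitution of constant length ℓ over a finite alphabet A such that X_θ is infinite, (X_θ,σ) has discrete spectrum, and c(θ) > 0. Then the maps σ^i∘θ, 0 ≤ i < ℓ, are contractions of the Besicovitch space ([Σ],D_1), the set [X_θ] is compact, the sets (σ^i∘θ)([X_θ]), 0 ≤ i < ℓ, are pairwise disjoint, and [X_θ] = ⋃_{i=0}^{ℓ−1} (σ^i∘θ)([X_θ]); that is, {σ^i∘θ}_{0≤i<ℓ} is an iterated function system satisfying the strong separation condition whose attractor is [X_θ]. -/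
open Filter Topology Set MeasureTheory
open scoped ENNReal

/-!
The subshift `Y` of the language of `θ` has, up to tails, the same points as `X_θ`, so everything
may be done in `Y`. For every `n`, the compact cells `σ^κ(θ^n(Y))`, `κ < ℓ^n`, cover `Y`, and each
has `D_1`-diameter at most `(1 - c(θ)/ℓ)^n`. Hence `D_1`-balls of `Y` are neighbourhoods in the
product topology, which makes `[X_θ]` compact.

Two points that stay in disjoint compact sets along an arithmetic progression differ with positive
density. If two of the images of `[X_θ]` met, then two distinct cells of level one would intersect,
and by minimality some `σ^d` with `ℓ ∤ d` would preserve `θ(Y)`. For every `n` this propagates to a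
`γ ∣ ℓ^(n+1)` with `ℓ ∤ γ` such that `σ^γ` preserves `θ^(n+1)(Y)`. A prime that divides `ℓ` more
often than `γ` forces `γ ≤ ℓ^(n+1) / 2^n`, so by the pigeonhole principle a block of length
`ℓ^(n+1)` has a period that is small compared with its length, and uniform recurrence spreads this
period to all of `Y`. Points with a common period that are `D_1`-close coincide, so a power of `θ`
is constant on letters and `X_θ` is finite.
-/

section UpperDensity

section Count

variable {p q : ℕ → Prop} [DecidablePred p] [DecidablePred q]

theorem upperDensity_eq_limsup_count (p : ℕ → Prop) [DecidablePred p] :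
    upperDensity {k | p k} = limsup (fun n : ℕ => (Nat.count p n : ℝ) / n) atTop := by
  simp only [upperDensity, indicator_apply, mem_ofPred_eq, Finset.sum_boole,
    Nat.count_eq_card_filter_range]

theorem count_div_le_one (n : ℕ) : (Nat.count p n : ℝ) / n ≤ 1 :=
  div_le_one_of_le₀ (by exact_mod_cast Nat.count_le _) n.cast_nonneg

theorem isBoundedUnder_count_div :
    IsBoundedUnder (· ≤ ·) atTop (fun n : ℕ => (Nat.count p n : ℝ) / n) :=
  isBoundedUnder_of ⟨1, count_div_le_one⟩

theorem isCoboundedUnder_count_div :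
    IsCoboundedUnder (· ≤ ·) atTop (fun n : ℕ => (Nat.count p n : ℝ) / n) :=
  (isBoundedUnder_of ⟨0, fun _ => by positivity⟩ :
    IsBoundedUnder (· ≥ ·) atTop _).isCoboundedUnder_le

theorem eventually_count_le_of_upperDensity_lt {β : ℝ} (h : upperDensity {k | p k} < β) :
    ∀ᶠ n : ℕ in atTop, (Nat.count p n : ℝ) ≤ β * n := by
  rw [upperDensity_eq_limsup_count] at h
  filter_upwards [eventually_lt_of_limsup_lt h isBoundedUnder_count_div,
    eventually_gt_atTop 0] with n hn hpos
  exact ((div_lt_iff₀ (by exact_mod_cast hpos)).1 hn).le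

end Count

theorem upperDensity_nonneg (E : Set ℕ) : 0 ≤ upperDensity E := by
  classical
  change 0 ≤ upperDensity {k | k ∈ E}
  rw [upperDensity_eq_limsup_count]
  exact le_limsup_of_frequently_le (Frequently.of_forall fun _ => by positivity)
    isBoundedUnder_count_div

theorem upperDensity_le_one (E : Set ℕ) : upperDensity E ≤ 1 := by
  classical
  change upperDensity {k | k ∈ E} ≤ 1
  rw [upperDensity_eq_limsup_count]
  exact limsup_le_of_le isCoboundedUnder_count_div (Eventually.of_forall count_div_le_one)

theorem upperDensity_true : upperDensity {_k | True} = 1 := by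
  rw [upperDensity_eq_limsup_count]
  refine (tendsto_const_nhds.congr' ?_).limsup_eq
  filter_upwards [eventually_gt_atTop 0] with n hn
  have hn' : (n : ℝ) ≠ 0 := by exact_mod_cast hn.ne'
  simp [hn']

theorem upperDensity_le_of_count_le {p q : ℕ → Prop} [DecidablePred p] [DecidablePred q]
    {a b e C : ℕ} (hb : 0 < b) (h : ∀ n, Nat.count q n ≤ a * Nat.count p (n / b + e) + C) :
    upperDensity {k | q k} ≤ a / b * upperDensity {k | p k} := by
  have hlt : ∀ β, upperDensity {k | p k} < β → upperDensity {k | q k} ≤ a / b * β := by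
    intro β hβ
    have hβ₀ : 0 ≤ β := (upperDensity_nonneg _).trans hβ.le
    have hindex : Tendsto (fun n : ℕ => n / b + e) atTop atTop :=
      tendsto_atTop_mono (fun _ => Nat.le_add_right _ _) (Nat.tendsto_div_const_atTop hb.ne')
    have hlim : Tendsto (fun n : ℕ => a / b * β + (a * β * e + C) / n) atTop (𝓝 (a / b * β)) := by
      simpa using tendsto_const_nhds.add (tendsto_const_div_atTop_nhds_zero_nat (a * β * e + C))
    rw [upperDensity_eq_limsup_count q, ← hlim.limsup_eq]
    refine limsup_le_limsup ?_ isCoboundedUnder_count_div hlim.isBoundedUnder_le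
    filter_upwards [hindex.eventually (eventually_count_le_of_upperDensity_lt hβ),
      eventually_gt_atTop 0] with n hn hpos
    rw [div_le_iff₀ (by exact_mod_cast hpos)]
    calc (Nat.count q n : ℝ) ≤ a * Nat.count p (n / b + e) + C := by exact_mod_cast h n
      _ ≤ a * (β * (n / b + e)) + C := by
          have hdiv : ((n / b + e : ℕ) : ℝ) ≤ n / b + e := by
            push_cast
            gcongr
            exact Nat.cast_div_le
          gcongr
          exact hn.trans (by gcongr)
      _ = (a / b * β + (a * β * e + C) / n) * n := by
          field_simp
          ring
  have hlim : Tendsto (fun β : ℝ => a / b * β) (𝓝[>] upperDensity {k | p k})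
      (𝓝 (a / b * upperDensity {k | p k})) :=
    (tendsto_const_nhds.mul tendsto_id).mono_left nhdsWithin_le_nhds
  exact ge_of_tendsto hlim (eventually_mem_nhdsWithin.mono hlt)

theorem upperDensity_add_right (p : ℕ → Prop) (i : ℕ) :
    upperDensity {k | p (k + i)} = upperDensity {k | p k} := by
  classical
  have hcount (n : ℕ) : Nat.count p (n + i) = Nat.count p i + Nat.count (fun k => p (k + i)) n := by
    rw [add_comm n i, Nat.count_add]
    simp only [add_comm]
  apply le_antisymm
  · simpa using upperDensity_le_of_count_le (a := 1) (e := i) (C := 0) one_pos fun n => by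
      have := hcount n
      simp only [Nat.div_one]
      omega
  · simpa using upperDensity_le_of_count_le (a := 1) (e := 0) (C := i) one_pos fun n => by
      have := hcount n
      have : Nat.count p n ≤ Nat.count p (n + i) := Nat.count_monotone _ (Nat.le_add_right n i)
      have : Nat.count p i ≤ i := Nat.count_le _
      simp only [Nat.div_one, add_zero]
      omega

theorem upperDensity_congr {p q : ℕ → Prop} (h : ∀ᶠ k in atTop, p k ↔ q k) :
    upperDensity {k | p k} = upperDensity {k | q k} := by
  obtain ⟨M, hM⟩ := eventually_atTop.1 h
  rw [← upperDensity_add_right p M, ← upperDensity_add_right q M]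
  simp only [hM _ (Nat.le_add_left M _)]

theorem inv_le_upperDensity {p : ℕ → Prop} {W : ℕ} (hW : 0 < W)
    (h : ∀ k, ∃ j, p j ∧ W * k ≤ j ∧ j < W * (k + 1)) : (W : ℝ)⁻¹ ≤ upperDensity {k | p k} := by
  classical
  have hcount (k : ℕ) : k ≤ Nat.count p (W * k) := by
    induction k with
    | zero => exact Nat.zero_le _
    | succ k ih =>
      obtain ⟨j, hj, hkj, hjk⟩ := h k
      exact ih.trans_lt ((Nat.count_monotone _ hkj).trans_lt (Nat.count_strict_mono hj hjk))
  have hle := upperDensity_le_of_count_le (p := p) (q := fun _ => True) (a := W) (b := 1) (C := W)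
    (e := 0) one_pos fun n => by
      have hdiv := (hcount (n / W)).trans (Nat.count_monotone _ (Nat.mul_div_le n W))
      have := Nat.lt_mul_div_succ n hW
      simp only [Nat.count_true, Nat.div_one, add_zero]
      nlinarith
  rw [upperDensity_true, Nat.cast_one, div_one] at hle
  exact (inv_le_iff_one_le_mul₀' (by exact_mod_cast hW)).2 hle

end UpperDensity

section ConstantLengthSubstitution

variable {A : Type*} {ℓ : ℕ} {hℓ : 0 < ℓ} {θ : A → Fin ℓ → A}

local notation "Θ" => substApply hℓ θ

/-- The two-sided shift action `k ↦ σ^k` of `ℤ` on `A^ℤ`. -/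
def zshift (k : ℤ) (x : ℤ → A) : ℤ → A := fun n => x (n + k)

section Shift

@[simp]
theorem zshift_apply (k : ℤ) (x : ℤ → A) (n : ℤ) : zshift k x n = x (n + k) := rfl

@[simp]
theorem zshift_zero (x : ℤ → A) : zshift 0 x = x := by
  ext n
  simp

@[simp]
theorem zshift_zshift (k l : ℤ) (x : ℤ → A) : zshift k (zshift l x) = zshift (k + l) x := by
  ext n
  simp [add_assoc]

theorem iterate_shift (i : ℕ) (x : ℤ → A) : shift^[i] x = zshift i x := by
  induction i with
  | zero => simp
  | succ i ih =>
    rw [Function.iterate_succ_apply', ih]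
    ext n
    simp [shift, add_assoc, add_comm (i : ℤ)]

theorem continuous_zshift [TopologicalSpace A] (k : ℤ) : Continuous (zshift k : (ℤ → A) → ℤ → A) :=
  continuous_pi fun n => continuous_apply (n + k)

theorem eventuallyEq_zshift {x y : ℤ → A} (h : x =ᶠ[atTop] y) (k : ℤ) :
    zshift k x =ᶠ[atTop] zshift k y :=
  (tendsto_atTop_add_const_right atTop k tendsto_id).eventually h

end Shift

section SubstApply

theorem substApply_apply_eq {x y : ℤ → A} {q : ℤ} (h : x (q / ℓ) = y (q / ℓ)) : Θ x q = Θ y q := by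
  simp only [substApply, h]

theorem substApply_mul_add (x : ℤ → A) (k : ℤ) (j : Fin ℓ) : Θ x (ℓ * k + j) = θ (x k) j := by
  have hpos : (0 : ℤ) < ℓ := by exact_mod_cast hℓ
  have hj : (j : ℤ) < ℓ := by exact_mod_cast j.2
  have hdiv : (ℓ * k + j : ℤ) / ℓ = k := by
    rw [add_comm, Int.add_mul_ediv_left _ _ hpos.ne', Int.ediv_eq_zero_of_lt (by positivity) hj,
      zero_add]
  have hmod : (ℓ * k + j : ℤ) % ℓ = j := by
    rw [add_comm, Int.add_mul_emod_self_left, Int.emod_eq_of_lt (by positivity) hj]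
  simp only [substApply, hdiv, hmod, Int.toNat_natCast]

theorem substApply_zshift (k : ℤ) (x : ℤ → A) : Θ (zshift k x) = zshift (ℓ * k) (Θ x) := by
  have hpos : (ℓ : ℤ) ≠ 0 := by exact_mod_cast hℓ.ne'
  ext n
  simp only [zshift_apply, substApply, Int.add_mul_ediv_left _ _ hpos, Int.add_mul_emod_self_left]

theorem iterate_substApply_zshift (n : ℕ) (k : ℤ) (x : ℤ → A) :
    Θ^[n] (zshift k x) = zshift (ℓ ^ n * k) (Θ^[n] x) := by
  induction n with
  | zero => simp
  | succ n ih =>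
    simp only [Function.iterate_succ_apply', ih, substApply_zshift, pow_succ', mul_assoc]

theorem iterate_substApply_apply_eq {n : ℕ} {x y : ℤ → A} {q : ℤ}
    (h : x (q / ℓ ^ n) = y (q / ℓ ^ n)) : Θ^[n] x q = Θ^[n] y q := by
  induction n generalizing q with
  | zero => simpa using h
  | succ n ih =>
    rw [Function.iterate_succ_apply', Function.iterate_succ_apply']
    refine substApply_apply_eq (ih ?_)
    rwa [Int.ediv_ediv_of_nonneg (Int.natCast_nonneg ℓ), ← pow_succ']

theorem iterate_substApply_apply_eq_of_lt {n : ℕ} {x y : ℤ → A} (h : x 0 = y 0) {q : ℤ}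
    (hq₀ : 0 ≤ q) (hq : q < ℓ ^ n) : Θ^[n] x q = Θ^[n] y q :=
  iterate_substApply_apply_eq (by rwa [Int.ediv_eq_zero_of_lt hq₀ hq])

theorem continuous_substApply [TopologicalSpace A] [DiscreteTopology A] :
    Continuous (substApply hℓ θ) :=
  continuous_pi fun n => (continuous_of_discreteTopology (f := fun a => θ a _)).comp
    (continuous_apply (n / (ℓ : ℤ)))

theorem eventuallyEq_substApply {x y : ℤ → A} (h : x =ᶠ[atTop] y) : Θ x =ᶠ[atTop] Θ y := by
  have hdiv : Tendsto (fun n : ℤ => n / (ℓ : ℤ)) atTop atTop :=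
    tendsto_atTop.2 fun b => (eventually_ge_atTop (b * ℓ)).mono fun n hn =>
      Int.le_ediv_of_mul_le (by exact_mod_cast hℓ) hn
  exact (hdiv.eventually h).mono fun n hn => substApply_apply_eq hn

end SubstApply

section Besicovitch

theorem besD1_nonneg (x y : ℤ → A) : 0 ≤ besD1 x y := upperDensity_nonneg _

theorem besD1_le_one (x y : ℤ → A) : besD1 x y ≤ 1 := upperDensity_le_one _

theorem besD1_congr {x x' y y' : ℤ → A} (hx : x =ᶠ[atTop] x') (hy : y =ᶠ[atTop] y') :
    besD1 x y = besD1 x' y' := by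
  refine upperDensity_congr ?_
  filter_upwards [tendsto_natCast_atTop_atTop.eventually hx,
    tendsto_natCast_atTop_atTop.eventually hy] with k hxk hyk
  simp only [hxk, hyk]

theorem besD1_self (x : ℤ → A) : besD1 x x = 0 := by
  simp [besD1, upperDensity]

theorem besD1_eq_zero_of_eventuallyEq {x y : ℤ → A} (h : x =ᶠ[atTop] y) : besD1 x y = 0 :=
  (besD1_congr h EventuallyEq.rfl).trans (besD1_self y)

theorem besD1_zshift_natCast (i : ℕ) (x y : ℤ → A) :
    besD1 (zshift i x) (zshift i y) = besD1 x y := by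
  simpa [besD1] using upperDensity_add_right (fun k : ℕ => x k ≠ y k) i

theorem eq_of_periodic_of_besD1_lt {x y : ℤ → A} {t : ℕ} (ht : 0 < t)
    (hx : Function.Periodic x t) (hy : Function.Periodic y t) (h : besD1 x y < (t : ℝ)⁻¹) :
    x = y := by
  by_contra hne
  obtain ⟨n, hn⟩ := Function.ne_iff.1 hne
  have ht' : (0 : ℤ) < t := by exact_mod_cast ht
  refine h.not_ge (inv_le_upperDensity ht fun k => ?_)
  have hr₀ := Int.emod_nonneg n ht'.ne'
  have hr := Int.emod_lt_of_pos n ht'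
  obtain ⟨r, hr_eq⟩ := Int.eq_ofNat_of_zero_le hr₀
  have hrep : ((t * k + r : ℕ) : ℤ) = n + (k - n / t) • (t : ℤ) := by
    push_cast
    rw [smul_eq_mul, ← hr_eq]
    linarith [Int.mul_ediv_add_emod n t]
  refine ⟨t * k + r, ?_, Nat.le_add_right _ _, ?_⟩
  · simpa only [hrep, hx.zsmul _ n, hy.zsmul _ n] using hn
  · have : r < t := by omega
    nlinarith

end Besicovitch

section Contraction

/-- The factor `1 - c(θ)/ℓ` by which `θ` contracts the Besicovitch space. -/
noncomputable def contractionRatio (θ : A → Fin ℓ → A) : ℝ := ((ℓ - cMin θ : ℕ) : ℝ) / ℓ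

theorem contractionRatio_nonneg (θ : A → Fin ℓ → A) : 0 ≤ contractionRatio θ := by
  unfold contractionRatio
  positivity

theorem contractionRatio_lt_one (hℓ : 0 < ℓ) (hc : 0 < cMin θ) : contractionRatio θ < 1 := by
  rw [contractionRatio, div_lt_one (by exact_mod_cast hℓ)]
  exact_mod_cast Nat.sub_lt hℓ hc

theorem hammingDist_le_sub_cMin [DecidableEq A] {a b : A} (h : a ≠ b) :
    hammingDist (θ a) (θ b) ≤ ℓ - cMin θ := by
  have hsum : coincCount θ a b + hammingDist (θ a) (θ b) = ℓ := by
    convert Finset.card_filter_add_card_filter_not (s := .univ) fun j : Fin ℓ => θ a j = θ b j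
    · unfold coincCount
      congr!
    · rfl
    · exact (Finset.card_fin ℓ).symm
  have hmin : cMin θ ≤ coincCount θ a b := Nat.sInf_le ⟨a, b, h, rfl⟩
  omega

theorem count_substApply_ne_block [DecidableEq A] (x y : ℤ → A) (n : ℕ) :
    Nat.count (fun j : ℕ => Θ x (ℓ * n + j : ℕ) ≠ Θ y (ℓ * n + j : ℕ)) ℓ =
      hammingDist (θ (x n)) (θ (y n)) := by
  rw [Nat.count_eq_card_filter_range, Finset.card_filter, hammingDist, Finset.card_filter,
    ← Fin.sum_univ_eq_sum_range
      (fun j => if Θ x (ℓ * n + j : ℕ) ≠ Θ y (ℓ * n + j : ℕ) then 1 else 0)]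
  refine Finset.sum_congr rfl fun j _ => ?_
  push_cast
  simp only [substApply_mul_add]

theorem count_substApply_ne_le [DecidableEq A] (x y : ℤ → A) (n : ℕ) :
    Nat.count (fun k : ℕ => Θ x k ≠ Θ y k) (ℓ * n) ≤
      (ℓ - cMin θ) * Nat.count (fun k : ℕ => x k ≠ y k) n := by
  induction n with
  | zero => simp
  | succ n ih =>
    rw [Nat.mul_succ, Nat.count_add, Nat.count_succ, mul_add, count_substApply_ne_block]
    refine add_le_add ih ?_
    split_ifs with hne
    · simpa using hammingDist_le_sub_cMin hne
    · rw [not_not.1 hne]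
      simp

theorem besD1_substApply_le (x y : ℤ → A) :
    besD1 (Θ x) (Θ y) ≤ contractionRatio θ * besD1 x y := by
  classical
  exact upperDensity_le_of_count_le (C := 0) (e := 1) hℓ fun n =>
    (Nat.count_monotone _ (Nat.lt_mul_div_succ n hℓ).le).trans (count_substApply_ne_le x y _)

theorem besD1_iterate_substApply_le (x y : ℤ → A) (n : ℕ) :
    besD1 (Θ^[n] x) (Θ^[n] y) ≤ contractionRatio θ ^ n := by
  induction n with
  | zero => simpa using besD1_le_one x y
  | succ n ih =>
    rw [Function.iterate_succ_apply', Function.iterate_succ_apply', pow_succ']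
    exact (besD1_substApply_le _ _).trans
      (mul_le_mul_of_nonneg_left ih (contractionRatio_nonneg θ))

theorem nontrivial_of_cMin_pos (hc : 0 < cMin θ) : Nontrivial A :=
  let ⟨_, a, b, hab, _⟩ := Nat.nonempty_of_pos_sInf hc
  ⟨a, b, hab⟩

theorem IsPrimitive.one_lt [Nontrivial A] (hprim : IsPrimitive hℓ θ) : 1 < ℓ := by
  obtain ⟨m, -, hm⟩ := hprim
  obtain ⟨a, b, hab⟩ := exists_pair_ne A
  obtain ⟨i, hi₀, hi, hia⟩ := hm a a
  obtain ⟨j, hj₀, hj, hjb⟩ := hm a b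
  refine lt_of_le_of_ne hℓ fun hℓ_one => hab ?_
  rw [← hℓ_one, Nat.cast_one, one_pow] at hi hj
  rw [← hia, ← hjb, show i = j by omega]

end Contraction

section FullShiftTopology

variable [TopologicalSpace A]

theorem tendsto_of_eqOn_Icc {u : ℕ → ℤ → A} {y : ℤ → A}
    (h : ∀ N : ℕ, EqOn (u N) y (Icc (-N) N)) : Tendsto u atTop (𝓝 y) := by
  refine tendsto_pi_nhds.2 fun q => tendsto_const_nhds.congr' ?_
  filter_upwards [eventually_ge_atTop q.natAbs] with N hN
  exact (h N ⟨by omega, by omega⟩).symm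

variable [DiscreteTopology A]

theorem eventually_eqOn_of_finite {s : Set ℤ} (hs : s.Finite) (x : ℤ → A) :
    ∀ᶠ y in 𝓝 x, EqOn y x s :=
  hs.eventually_all.2 fun n _ =>
    (continuous_apply n).continuousAt.preimage_mem_nhds ((isOpen_discrete {x n}).mem_nhds rfl)

theorem isClosed_of_eqOn_finite {S : Set (ℤ → A)} {s : Set ℤ} (hs : s.Finite)
    (h : ∀ ⦃x y⦄, EqOn x y s → x ∈ S → y ∈ S) : IsClosed S :=
  isClosed_iff_frequently.2 fun x hx =>
    let ⟨_, hyS, hyx⟩ := (hx.and_eventually (eventually_eqOn_of_finite hs x)).exists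
    h hyx hyS

theorem exists_uniform_bound_of_cover {X : Type*} [TopologicalSpace X] {K : Set X}
    (hK : IsCompact K) {U : ℤ → Set X} (hU : ∀ k, IsOpen (U k)) (hcover : K ⊆ ⋃ k, U k) :
    ∃ N : ℕ, ∀ x ∈ K, ∃ k : ℤ, |k| ≤ N ∧ x ∈ U k := by
  obtain ⟨t, ht⟩ := hK.elim_finite_subcover U hU hcover
  refine ⟨t.sup Int.natAbs, fun x hx => ?_⟩
  obtain ⟨k, hkt, hxk⟩ := mem_iUnion₂.1 (ht hx)
  have := Finset.le_sup (f := Int.natAbs) hkt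
  exact ⟨k, by rwa [Int.abs_eq_natAbs, Nat.cast_le], hxk⟩

theorem exists_uniform_ne_of_disjoint {C D : Set (ℤ → A)} (hC : IsCompact C) (hD : IsCompact D)
    (hCD : Disjoint C D) :
    ∃ N : ℕ, ∀ x ∈ C, ∀ y ∈ D, ∃ q : ℤ, |q| ≤ N ∧ x q ≠ y q := by
  obtain ⟨N, hN⟩ := exists_uniform_bound_of_cover (hC.prod hD)
    (U := fun q => {z | z.1 q ≠ z.2 q})
    (fun q => isOpen_ne_fun ((continuous_apply q).comp continuous_fst)
      ((continuous_apply q).comp continuous_snd))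
    fun z hz => mem_iUnion.2 (Function.ne_iff.1 (hCD.ne_of_mem hz.1 hz.2))
  exact ⟨N, fun x hx y hy => hN (x, y) ⟨hx, hy⟩⟩

theorem besD1_pos_of_disjoint {C D : Set (ℤ → A)} (hC : IsCompact C) (hD : IsCompact D)
    (hCD : Disjoint C D) {m : ℕ} (hm : 0 < m) {x y : ℤ → A}
    (hx : ∀ k : ℕ, zshift (m * k) x ∈ C) (hy : ∀ k : ℕ, zshift (m * k) y ∈ D) :
    0 < besD1 x y := by
  obtain ⟨N, hN⟩ := exists_uniform_ne_of_disjoint hC hD hCD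
  have hW : 0 < m * (2 * N + 1) := by positivity
  refine lt_of_lt_of_le (inv_pos.2 (by exact_mod_cast hW)) (inv_le_upperDensity hW fun k => ?_)
  obtain ⟨q, hq, hne⟩ := hN _ (hx ((2 * N + 1) * k + N)) _ (hy ((2 * N + 1) * k + N))
  obtain ⟨hq₁, hq₂⟩ := abs_le.1 hq
  have hmN : (N : ℤ) ≤ m * N := le_mul_of_one_le_left (by positivity) (by exact_mod_cast hm)
  have hj₀ : 0 ≤ q + m * ((2 * N + 1) * k + N) := by
    have : (0 : ℤ) ≤ m * ((2 * N + 1) * k) := by positivity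
    linarith
  obtain ⟨j, hj⟩ := Int.eq_ofNat_of_zero_le hj₀
  refine ⟨j, ?_, ?_, ?_⟩
  · simpa [hj] using hne
  · zify
    nlinarith
  · zify
    nlinarith

end FullShiftTopology

/-- The window `[-N, N]` of `x` is legal for `θ`: it is a factor of some word `θ^n(a)`. The word is
read off as `[0, ℓ^n)` in `θ^n(w)`, so only the letter `a = w_0` matters. -/
def IsLegal (hℓ : 0 < ℓ) (θ : A → Fin ℓ → A) (N : ℕ) (x : ℤ → A) : Prop :=
  ∃ (n : ℕ) (i : ℤ) (w : ℤ → A), N ≤ i ∧ i + N < ℓ ^ n ∧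
    EqOn x (zshift i ((substApply hℓ θ)^[n] w)) (Icc (-N) N)

/-- The subshift of the language of `θ`: all of its windows are legal. The orbit closure of a
`θ`-periodic point `x₀` may be larger, because the two-letter word across the origin of `x₀` need
not be legal. -/
def legalShift (hℓ : 0 < ℓ) (θ : A → Fin ℓ → A) : Set (ℤ → A) :=
  {y | ∀ N, IsLegal hℓ θ N y}

local notation "Y" => legalShift hℓ θ

section Legal

variable {N : ℕ} {x y : ℤ → A}

theorem IsLegal.congr (h : IsLegal hℓ θ N x) (hxy : EqOn y x (Icc (-N) N)) : IsLegal hℓ θ N y := by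
  obtain ⟨n, i, w, hi, hin, hw⟩ := h
  exact ⟨n, i, w, hi, hin, hxy.trans hw⟩

theorem IsLegal.zshift {k : ℤ} (h : IsLegal hℓ θ (N + k.natAbs) x) :
    IsLegal hℓ θ N (zshift k x) := by
  obtain ⟨n, i, w, hi, hin, hw⟩ := h
  refine ⟨n, k + i, w, by omega, by omega, fun q hq => ?_⟩
  simpa [add_assoc] using hw (show q + k ∈ Icc _ _ by simp only [mem_Icc] at hq ⊢; omega)

theorem IsLegal.substApply (h : IsLegal hℓ θ N x) : IsLegal hℓ θ N (Θ x) := by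
  obtain ⟨n, i, w, hi, hin, hw⟩ := h
  have hpos : (0 : ℤ) < ℓ := by exact_mod_cast hℓ
  refine ⟨n + 1, ℓ * i, w, by nlinarith, by rw [pow_succ']; nlinarith, fun q hq => ?_⟩
  rw [Function.iterate_succ_apply', ← substApply_zshift]
  refine substApply_apply_eq (hw ⟨?_, ?_⟩)
  · exact Int.le_ediv_of_mul_le hpos (by nlinarith [hq.1])
  · exact Int.ediv_le_of_le_mul hpos (by nlinarith [hq.2])

theorem isClosed_setOf_isLegal [TopologicalSpace A] [DiscreteTopology A] (N : ℕ) :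
    IsClosed {x | IsLegal hℓ θ N x} :=
  isClosed_of_eqOn_finite (finite_Icc (-N : ℤ) N) fun _ _ hxy hx => IsLegal.congr hx hxy.symm

theorem IsLegal.exists_occurrence (hprim : IsPrimitive hℓ θ) (h : IsLegal hℓ θ N x) :
    ∃ n : ℕ, ∀ w : ℤ → A, ∃ k : ℤ, N ≤ k ∧ k + N < ℓ ^ n ∧
      EqOn x (_root_.zshift k (Θ^[n] w)) (Icc (-N) N) := by
  obtain ⟨n, i, v, hi, hin, hv⟩ := h
  obtain ⟨m, -, hm⟩ := hprim
  refine ⟨n + m, fun w => ?_⟩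
  obtain ⟨j, hj₀, hj, hjv⟩ := hm (w 0) (v 0)
  have hletter : v 0 = _root_.zshift j (Θ^[m] w) 0 := by
    rw [← hjv, zshift_apply, zero_add]
    exact iterate_substApply_apply_eq_of_lt (x := fun _ => w 0) rfl hj₀ hj
  have hpow : (ℓ : ℤ) ^ n * (j + 1) ≤ ℓ ^ (n + m) := by
    rw [pow_add]
    gcongr
    exact hj
  refine ⟨i + ℓ ^ n * j, by nlinarith [pow_nonneg (Int.natCast_nonneg ℓ) n], by linarith,
    fun q hq => ?_⟩
  rw [hv hq, ← zshift_zshift, Function.iterate_add_apply, ← iterate_substApply_zshift]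
  exact iterate_substApply_apply_eq_of_lt hletter (by linarith [hq.1]) (by linarith [hq.2])

end Legal

section LegalShift

variable {x y : ℤ → A}

theorem zshift_mem_legalShift (hy : y ∈ Y) (k : ℤ) : zshift k y ∈ Y :=
  fun _ => (hy _).zshift

theorem iterate_substApply_mem_legalShift (hy : y ∈ Y) (n : ℕ) : Θ^[n] y ∈ Y :=
  (show MapsTo Θ Y Y from fun _ hz N => (hz N).substApply).iterate n hy

theorem isClosed_legalShift [TopologicalSpace A] [DiscreteTopology A] : IsClosed Y := by
  rw [legalShift, ofPred_forall]
  exact isClosed_iInter isClosed_setOf_isLegal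

theorem isCompact_legalShift [TopologicalSpace A] [DiscreteTopology A] [Finite A] : IsCompact Y :=
  isClosed_legalShift.isCompact

theorem exists_eqOn_iterate_substApply (hy : y ∈ Y) (n : ℕ) :
    ∃ (c : ℤ) (w : ℤ → A), EqOn (zshift c y) (Θ^[n] w) (Ico 0 (ℓ ^ n)) := by
  obtain ⟨m, i, w, hi, him, hw⟩ := hy (ℓ ^ n)
  push_cast at hi him hw
  have hpos : (0 : ℤ) < ℓ ^ n := by exact_mod_cast pow_pos hℓ n
  obtain ⟨d, rfl⟩ : ∃ d, m = n + d := Nat.exists_eq_add_of_le <| by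
    by_contra! hmn
    have : (ℓ : ℤ) ^ m ≤ ℓ ^ n := by exact_mod_cast Nat.pow_le_pow_right hℓ hmn.le
    linarith
  refine ⟨-(i % ℓ ^ n), zshift (i / ℓ ^ n) (Θ^[d] w), fun q hq => ?_⟩
  have hmod₀ := Int.emod_nonneg i hpos.ne'
  have hmod := Int.emod_lt_of_pos i hpos
  have hindex : q + -(i % ℓ ^ n) + i = q + ℓ ^ n * (i / ℓ ^ n) := by
    linarith [Int.mul_ediv_add_emod i (ℓ ^ n)]
  rw [iterate_substApply_zshift, ← Function.iterate_add_apply, zshift_apply,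
    hw ⟨by linarith [hq.1], by linarith [hq.2]⟩, zshift_apply, zshift_apply, hindex]

theorem exists_apply_eq_of_mem_legalShift (hprim : IsPrimitive hℓ θ) (hy : y ∈ Y) (b : A) :
    ∃ k, y k = b := by
  obtain ⟨m, -, hm⟩ := hprim
  obtain ⟨c, w, hw⟩ := exists_eqOn_iterate_substApply hy m
  obtain ⟨j, hj₀, hj, hjb⟩ := hm (w 0) b
  refine ⟨j + c, ?_⟩
  rw [← hjb, ← zshift_apply c y, hw ⟨hj₀, hj⟩]
  exact iterate_substApply_apply_eq_of_lt (y := fun _ => w 0) rfl hj₀ hj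

theorem exists_eqOn_zshift (hprim : IsPrimitive hℓ θ) (hx : x ∈ Y) (hy : y ∈ Y) (N : ℕ) :
    ∃ k, EqOn x (zshift k y) (Icc (-N) N) := by
  obtain ⟨n, hn⟩ := (hx N).exists_occurrence hprim
  obtain ⟨c, w, hw⟩ := exists_eqOn_iterate_substApply hy n
  obtain ⟨k, hk₀, hk, hkw⟩ := hn w
  refine ⟨k + c, fun q hq => ?_⟩
  rw [hkw hq, ← zshift_zshift]
  exact (hw ⟨by linarith [hq.1], by linarith [hq.2]⟩).symm

theorem legalShift_subset_of_isClosed [TopologicalSpace A] (hprim : IsPrimitive hℓ θ) (hy : y ∈ Y)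
    {S : Set (ℤ → A)} (hS : IsClosed S) (horbit : ∀ k, zshift k y ∈ S) : Y ⊆ S := by
  intro x hx
  choose k hk using exists_eqOn_zshift hprim hx hy
  exact hS.mem_of_tendsto (tendsto_of_eqOn_Icc fun N => (hk N).symm)
    (Eventually.of_forall fun N => horbit (k N))

theorem exists_uniform_recurrence [TopologicalSpace A] [DiscreteTopology A] [Finite A]
    (hprim : IsPrimitive hℓ θ) (N : ℕ) :
    ∃ R : ℕ, ∀ x ∈ Y, ∀ y ∈ Y, ∃ k : ℤ, |k| ≤ R ∧ EqOn x (zshift k y) (Icc (-N) N) := by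
  have hopen (k : ℤ) : IsOpen {z : (ℤ → A) × (ℤ → A) | EqOn z.1 (zshift k z.2) (Icc (-N) N)} := by
    simp only [EqOn, ofPred_forall]
    refine (finite_Icc (-N : ℤ) N).isOpen_biInter fun q _ => ?_
    have hcont : Continuous fun z : (ℤ → A) × (ℤ → A) => (z.1 q, z.2 (q + k)) := by fun_prop
    exact (isOpen_discrete (diagonal A)).preimage hcont
  obtain ⟨R, hR⟩ := exists_uniform_bound_of_cover
    ((isCompact_legalShift (hℓ := hℓ) (θ := θ)).prod (isCompact_legalShift (hℓ := hℓ) (θ := θ)))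
    hopen fun z hz => mem_iUnion.2 (exists_eqOn_zshift hprim hz.1 hz.2 N)
  exact ⟨R, fun x hx y hy => hR (x, y) ⟨hx, hy⟩⟩

end LegalShift

section Cells

variable [TopologicalSpace A] [DiscreteTopology A] [Finite A] {x z : ℤ → A}

theorem isCompact_image_iterate_substApply (n : ℕ) : IsCompact (Θ^[n] '' Y) :=
  isCompact_legalShift.image (continuous_substApply.iterate n)

theorem isCompact_zshift_image_iterate_substApply (k : ℤ) (n : ℕ) :
    IsCompact (zshift k '' (Θ^[n] '' Y)) :=
  (isCompact_image_iterate_substApply n).image (continuous_zshift k)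

theorem legalShift_subset_iUnion (hprim : IsPrimitive hℓ θ) (n : ℕ) :
    Y ⊆ ⋃ κ : Fin (ℓ ^ n), zshift κ '' (Θ^[n] '' Y) := by
  intro x hx
  refine legalShift_subset_of_isClosed hprim (iterate_substApply_mem_legalShift hx n)
    (isClosed_iUnion_of_finite fun κ : Fin (ℓ ^ n) =>
      (isCompact_zshift_image_iterate_substApply κ n).isClosed) (fun k => ?_) hx
  have hpos : (0 : ℤ) < ℓ ^ n := by exact_mod_cast pow_pos hℓ n
  obtain ⟨κ, hκ⟩ := Int.eq_ofNat_of_zero_le (Int.emod_nonneg k hpos.ne')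
  have hκlt : κ < ℓ ^ n := by
    have := Int.emod_lt_of_pos k hpos
    rw [hκ] at this
    exact_mod_cast this
  refine mem_iUnion.2 ⟨⟨κ, hκlt⟩, _, mem_image_of_mem _ (zshift_mem_legalShift hx (k / ℓ ^ n)), ?_⟩
  rw [iterate_substApply_zshift, zshift_zshift, ← hκ, Int.emod_add_mul_ediv]

theorem exists_eq_zshift_substApply (hprim : IsPrimitive hℓ θ) (hx : x ∈ Y) :
    ∃ κ < ℓ, ∃ v ∈ Y, zshift κ (Θ v) = x := by
  obtain ⟨κ, _, ⟨v, hv, rfl⟩, hvx⟩ := mem_iUnion.1 (legalShift_subset_iUnion hprim 1 hx)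
  exact ⟨κ, by simpa using κ.2, v, hv, hvx⟩

theorem eventually_besD1_le (hprim : IsPrimitive hℓ θ) (z : ℤ → A) (n : ℕ) :
    ∀ᶠ y in 𝓝[Y] z, besD1 y z ≤ contractionRatio θ ^ n := by
  have hcell : ∀ᶠ y in 𝓝 z, {κ : Fin (ℓ ^ n) | y ∈ zshift κ '' (Θ^[n] '' Y)} ⊆
      {κ : Fin (ℓ ^ n) | z ∈ zshift κ '' (Θ^[n] '' Y)} :=
    (locallyFinite_of_finite fun κ : Fin (ℓ ^ n) =>
      zshift κ '' (Θ^[n] '' Y)).eventually_subset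
      (fun κ => (isCompact_zshift_image_iterate_substApply κ n).isClosed) z
  filter_upwards [nhdsWithin_le_nhds hcell, self_mem_nhdsWithin] with y hyz hy
  obtain ⟨κ, hyκ⟩ := mem_iUnion.1 (legalShift_subset_iUnion hprim n hy)
  obtain ⟨_, ⟨v', -, rfl⟩, hv'⟩ := hyz hyκ
  obtain ⟨_, ⟨v, -, rfl⟩, hv⟩ := hyκ
  rw [← hv, ← hv', besD1_zshift_natCast]
  exact besD1_iterate_substApply_le v v' n

theorem tendsto_besD1_nhdsWithin (hprim : IsPrimitive hℓ θ) (hc : 0 < cMin θ) (z : ℤ → A) :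
    Tendsto (fun y => besD1 y z) (𝓝[Y] z) (𝓝 0) := by
  refine tendsto_order.2 ⟨fun a ha => Eventually.of_forall fun y => ha.trans_le (besD1_nonneg y z),
    fun ε hε => ?_⟩
  obtain ⟨n, hn⟩ := exists_pow_lt_of_lt_one hε (contractionRatio_lt_one hℓ hc)
  exact (eventually_besD1_le hprim z n).mono fun y hy => hy.trans_lt hn

theorem exists_besD1_tendsto_subseq (hprim : IsPrimitive hℓ θ) (hc : 0 < cMin θ)
    {u : ℕ → ℤ → A} (hu : ∀ k, u k ∈ Y) :
    ∃ z ∈ Y, ∃ φ : ℕ → ℕ, StrictMono φ ∧ Tendsto (fun k => besD1 (u (φ k)) z) atTop (𝓝 0) := by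
  obtain ⟨z, hz, φ, hφ, hlim⟩ := isCompact_legalShift.tendsto_subseq hu
  exact ⟨z, hz, φ, hφ, (tendsto_besD1_nhdsWithin hprim hc z).comp
    (tendsto_nhdsWithin_iff.2 ⟨hlim, Eventually.of_forall fun k => hu (φ k)⟩)⟩

end Cells

section OrbitClosure

variable {x₀ x : ℤ → A}

theorem exists_iterate_substApply_eq (hper : x₀ ∈ Function.periodicPts Θ) (n : ℕ) :
    ∃ w, Θ^[n] w = x₀ :=
  let ⟨w, _, hw⟩ := (Function.bijOn_periodicPts Θ).surjOn.iterate n hper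
  ⟨w, hw⟩

theorem isLegal_zshift_of_natCast_le (hlt : 1 < ℓ) (hper : x₀ ∈ Function.periodicPts Θ) {N : ℕ}
    {k : ℤ} (hk : N ≤ k) : IsLegal hℓ θ N (zshift k x₀) := by
  obtain ⟨n, hn⟩ := pow_unbounded_of_one_lt (k + N) (by exact_mod_cast hlt : (1 : ℤ) < ℓ)
  obtain ⟨w, rfl⟩ := exists_iterate_substApply_eq hper n
  exact ⟨n, k, w, hk, hn, fun _ _ => rfl⟩

theorem isLegal_zshift_of_lt_neg_natCast (hlt : 1 < ℓ) (hper : x₀ ∈ Function.periodicPts Θ) {N : ℕ}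
    {k : ℤ} (hk : k < -N) : IsLegal hℓ θ N (zshift k x₀) := by
  obtain ⟨n, hn⟩ := pow_unbounded_of_one_lt (N - k) (by exact_mod_cast hlt : (1 : ℤ) < ℓ)
  obtain ⟨w, rfl⟩ := exists_iterate_substApply_eq hper n
  refine ⟨n, k + ℓ ^ n, zshift (-1) w, by linarith, by linarith, fun q _ => ?_⟩
  simp [iterate_substApply_zshift, add_assoc]

theorem isLegal_zshift_or_mem_Icc (hlt : 1 < ℓ) (hper : x₀ ∈ Function.periodicPts Θ) (N : ℕ)
    (k : ℤ) : IsLegal hℓ θ N (zshift k x₀) ∨ k ∈ Icc (-N : ℤ) N := by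
  by_cases hk : k ∈ Icc (-N : ℤ) N
  · exact Or.inr hk
  · rcases lt_or_ge k (-N) with hneg | hneg
    · exact Or.inl (isLegal_zshift_of_lt_neg_natCast hlt hper hneg)
    · exact Or.inl (isLegal_zshift_of_natCast_le hlt hper (by simp only [mem_Icc] at hk; omega))

variable [TopologicalSpace A]

theorem orbitClosure_eq_closure_range (x₀ : ℤ → A) :
    orbitClosure x₀ = closure (range fun k => zshift k x₀) := by
  simp only [orbitClosure, range, eq_comm]
  rfl

theorem legalShift_subset_orbitClosure (hprim : IsPrimitive hℓ θ)
    (hper : x₀ ∈ Function.periodicPts Θ) : Y ⊆ orbitClosure x₀ := by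
  intro x hx
  have hwindow (N : ℕ) : ∃ k, EqOn x (zshift k x₀) (Icc (-N) N) := by
    obtain ⟨n, hn⟩ := (hx N).exists_occurrence hprim
    obtain ⟨w, rfl⟩ := exists_iterate_substApply_eq hper n
    exact (hn w).imp fun _ hk => hk.2.2
  choose k hk using hwindow
  rw [orbitClosure_eq_closure_range]
  exact mem_closure_of_tendsto (tendsto_of_eqOn_Icc fun N => (hk N).symm)
    (Eventually.of_forall fun N => mem_range_self (k N))

variable [DiscreteTopology A]

theorem orbitClosure_subset (hlt : 1 < ℓ) (hper : x₀ ∈ Function.periodicPts Θ) :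
    orbitClosure x₀ ⊆ range (fun k => zshift k x₀) ∪ Y := by
  intro x hx
  by_contra hx'
  rw [mem_union, not_or] at hx'
  obtain ⟨N, hN⟩ := not_forall.1 hx'.2
  have hclosed : IsClosed ((fun k => zshift k x₀) '' Icc (-N : ℤ) N ∪ {y | IsLegal hℓ θ N y}) :=
    ((finite_Icc (-N : ℤ) N).image _).isClosed.union (isClosed_setOf_isLegal N)
  have horbit : range (fun k => zshift k x₀) ⊆
      (fun k => zshift k x₀) '' Icc (-N : ℤ) N ∪ {y | IsLegal hℓ θ N y} :=
    range_subset_iff.2 fun k =>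
      (isLegal_zshift_or_mem_Icc hlt hper N k).symm.imp_left (mem_image_of_mem _)
  rw [orbitClosure_eq_closure_range] at hx
  rcases closure_minimal horbit hclosed hx with hfin | hlegal
  · exact hx'.1 (image_subset_range _ _ hfin)
  · exact hN hlegal

variable [Finite A]

theorem legalShift_nonempty (hlt : 1 < ℓ) (hper : x₀ ∈ Function.periodicPts Θ) : (Y).Nonempty := by
  obtain ⟨z, φ, hφ, hlim⟩ := CompactSpace.tendsto_subseq fun k : ℕ => zshift k x₀
  refine ⟨z, fun N => (isClosed_setOf_isLegal N).mem_of_tendsto hlim ?_⟩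
  filter_upwards [hφ.tendsto_atTop.eventually_ge_atTop N] with k hk
  exact isLegal_zshift_of_natCast_le hlt hper (by exact_mod_cast hk)

theorem exists_mem_legalShift_eqOn_Ici (hprim : IsPrimitive hℓ θ) (hlt : 1 < ℓ)
    (hper : x₀ ∈ Function.periodicPts Θ) : ∃ z ∈ Y, EqOn z x₀ (Ici 0) := by
  obtain ⟨y, hy⟩ := legalShift_nonempty hlt hper
  have happrox (n : ℕ) : ∃ z ∈ Y, EqOn z x₀ (Ico 0 (ℓ ^ n)) := by
    obtain ⟨w, rfl⟩ := exists_iterate_substApply_eq hper n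
    obtain ⟨k, hk⟩ := exists_apply_eq_of_mem_legalShift hprim hy (w 0)
    refine ⟨Θ^[n] (zshift k y),
      iterate_substApply_mem_legalShift (zshift_mem_legalShift hy k) n, fun q hq => ?_⟩
    exact iterate_substApply_apply_eq_of_lt (by simpa using hk) hq.1 hq.2
  choose u hu hux using happrox
  obtain ⟨z, hz, φ, hφ, hlim⟩ := isCompact_legalShift.tendsto_subseq hu
  refine ⟨z, hz, fun q hq => ?_⟩
  obtain ⟨n₀, hn₀⟩ := pow_unbounded_of_one_lt q (by exact_mod_cast hlt : (1 : ℤ) < ℓ)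
  refine tendsto_nhds_unique (tendsto_pi_nhds.1 hlim q) (tendsto_const_nhds.congr' ?_)
  filter_upwards [eventually_ge_atTop n₀] with n hn
  refine (hux (φ n) ⟨hq, hn₀.trans_le ?_⟩).symm
  exact_mod_cast Nat.pow_le_pow_right hℓ (hn.trans hφ.le_apply)

theorem exists_mem_legalShift_eventuallyEq (hprim : IsPrimitive hℓ θ) (hlt : 1 < ℓ)
    (hper : x₀ ∈ Function.periodicPts Θ) (hx : x ∈ orbitClosure x₀) :
    ∃ z ∈ Y, z =ᶠ[atTop] x := by
  rcases orbitClosure_subset hlt hper hx with ⟨k, rfl⟩ | hxY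
  · obtain ⟨z, hz, hzx⟩ := exists_mem_legalShift_eqOn_Ici hprim hlt hper
    exact ⟨zshift k z, zshift_mem_legalShift hz k,
      eventuallyEq_zshift ((eventually_ge_atTop 0).mono hzx) k⟩
  · exact ⟨x, hxY, EventuallyEq.rfl⟩

end OrbitClosure

section Recognizability

variable {n : ℕ} {v w : ℤ → A}

/-- The group of shifts `σ^s` that preserve the cell `θ^n(Y)` of the legal shift `Y`. It contains
`ℓ^n ℤ`, with equality exactly when the translates of the cell by `0, …, ℓ^n - 1` are distinct. -/
def blockStabilizer (hℓ : 0 < ℓ) (θ : A → Fin ℓ → A) (n : ℕ) : AddSubgroup ℤ where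
  carrier := {s | ∀ x, zshift s x ∈ (substApply hℓ θ)^[n] '' legalShift hℓ θ ↔
    x ∈ (substApply hℓ θ)^[n] '' legalShift hℓ θ}
  zero_mem' := by simp
  add_mem' {s t} hs ht x := by rw [← zshift_zshift, hs, ht]
  neg_mem' {s} hs x := by rw [← hs, zshift_zshift, add_neg_cancel, zshift_zero]

theorem exists_eq_zshift_of_mem_blockStabilizer {s : ℤ} (hs : s ∈ blockStabilizer hℓ θ n)
    (hv : v ∈ Y) : ∃ u ∈ Y, Θ^[n] u = zshift s (Θ^[n] v) :=
  (hs _).2 (mem_image_of_mem _ hv)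

theorem pow_mem_blockStabilizer (n : ℕ) : (ℓ : ℤ) ^ n ∈ blockStabilizer hℓ θ n := by
  refine fun x => ⟨?_, ?_⟩
  · rintro ⟨v, hv, hvx⟩
    refine ⟨zshift (-1) v, zshift_mem_legalShift hv _, ?_⟩
    simp [iterate_substApply_zshift, hvx]
  · rintro ⟨v, hv, rfl⟩
    refine ⟨zshift 1 v, zshift_mem_legalShift hv _, ?_⟩
    rw [iterate_substApply_zshift, mul_one]

section Cells

variable [TopologicalSpace A] [DiscreteTopology A] [Finite A]

theorem zshift_iterate_substApply_mem_of_eq (hprim : IsPrimitive hℓ θ) (hv : v ∈ Y) (hw : w ∈ Y)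
    {s : ℤ} (h : zshift s (Θ^[n] v) = Θ^[n] w) {u : ℤ → A} (hu : u ∈ Y) :
    zshift s (Θ^[n] u) ∈ Θ^[n] '' Y := by
  refine legalShift_subset_of_isClosed hprim hv
    ((isCompact_image_iterate_substApply (hℓ := hℓ) (θ := θ) n).isClosed.preimage
      ((continuous_zshift s).comp (continuous_substApply.iterate n))) (fun k => ?_) hu
  refine ⟨zshift k w, zshift_mem_legalShift hw k, ?_⟩
  simp [iterate_substApply_zshift, ← h, add_comm]

theorem mem_blockStabilizer_of_eq (hprim : IsPrimitive hℓ θ) (hv : v ∈ Y) (hw : w ∈ Y) {s : ℤ}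
    (h : zshift s (Θ^[n] v) = Θ^[n] w) : s ∈ blockStabilizer hℓ θ n := by
  have hneg : zshift (-s) (Θ^[n] w) = Θ^[n] v := by
    rw [← h, zshift_zshift, neg_add_cancel, zshift_zero]
  refine fun x => ⟨?_, ?_⟩
  · rintro ⟨u, hu, hux⟩
    have := zshift_iterate_substApply_mem_of_eq hprim hw hv hneg hu
    rwa [hux, zshift_zshift, neg_add_cancel, zshift_zero] at this
  · rintro ⟨u, hu, rfl⟩
    exact zshift_iterate_substApply_mem_of_eq hprim hv hw h hu

theorem exists_mem_blockStabilizer_succ (hprim : IsPrimitive hℓ θ) (hY : (Y).Nonempty) {d : ℤ}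
    (hd : d ∈ blockStabilizer hℓ θ 1) (hdvd : ¬(ℓ : ℤ) ∣ d) (n : ℕ) :
    ∃ s ∈ blockStabilizer hℓ θ (n + 1), ¬(ℓ : ℤ) ∣ s := by
  obtain ⟨v, hv⟩ := hY
  obtain ⟨u, hu, huv⟩ := exists_eq_zshift_of_mem_blockStabilizer hd
    (iterate_substApply_mem_legalShift hv n)
  obtain ⟨κ, _, ⟨w, hw, rfl⟩, rfl⟩ := mem_iUnion.1 (legalShift_subset_iUnion hprim n hu)
  refine ⟨d - ℓ * κ, mem_blockStabilizer_of_eq hprim hv hw ?_, fun h => hdvd ?_⟩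
  · simp only [Function.iterate_one, substApply_zshift, ← Function.iterate_succ_apply' Θ] at huv
    rw [sub_eq_neg_add, ← zshift_zshift, ← huv, zshift_zshift, neg_add_cancel, zshift_zero]
  · exact (dvd_sub_left (dvd_mul_right _ _)).1 h

end Cells

theorem mul_two_pow_le_of_dvd_pow {γ ℓ n : ℕ} (hℓ : 0 < ℓ) (hγ : γ ∣ ℓ ^ (n + 1)) (h : ¬ℓ ∣ γ) :
    γ * 2 ^ n ≤ ℓ ^ (n + 1) := by
  obtain ⟨κ, hκ⟩ := hγ
  obtain ⟨hγ₀, hκ₀⟩ := mul_ne_zero_iff.1 (hκ ▸ (pow_pos hℓ _).ne')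
  rw [← Nat.factorization_le_iff_dvd hℓ.ne' hγ₀, Finsupp.le_def] at h
  push Not at h
  obtain ⟨q, hq⟩ := h
  have hprime : q.Prime := by
    by_contra hq'
    simp [Nat.factorization_eq_zero_of_not_prime ℓ hq'] at hq
  have hfactorization : (n + 1) * ℓ.factorization q = γ.factorization q + κ.factorization q := by
    simpa [Nat.factorization_mul hγ₀ hκ₀] using congrArg (fun m => m.factorization q) hκ
  have hle : n ≤ κ.factorization q := by nlinarith
  rw [hκ]
  gcongr
  exact (Nat.pow_le_pow_left hprime.two_le n).trans
    (Nat.le_of_dvd hκ₀.bot_lt ((hprime.pow_dvd_iff_le_factorization hκ₀).2 hle))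

theorem exists_pos_mem_mul_two_pow_le {H : AddSubgroup ℤ} {s : ℤ} (hℓ : 0 < ℓ)
    (hpow : (ℓ : ℤ) ^ (n + 1) ∈ H) (hs : s ∈ H) (hdvd : ¬(ℓ : ℤ) ∣ s) :
    ∃ γ : ℕ, 0 < γ ∧ (γ : ℤ) ∈ H ∧ γ * 2 ^ n ≤ ℓ ^ (n + 1) := by
  obtain ⟨a, ha⟩ := Int.subgroup_cyclic H
  have hmem (t : ℤ) : t ∈ H ↔ (a.natAbs : ℤ) ∣ t := by
    rw [ha, ← AddSubgroup.zmultiples_eq_closure, Int.mem_zmultiples_iff, Int.natAbs_dvd]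
  rw [hmem] at hpow hs
  have hdvd_pow : a.natAbs ∣ ℓ ^ (n + 1) := by exact_mod_cast hpow
  refine ⟨a.natAbs, Nat.pos_of_dvd_of_pos hdvd_pow (by positivity), (hmem _).2 dvd_rfl,
    mul_two_pow_le_of_dvd_pow hℓ hdvd_pow fun h => hdvd ?_⟩
  exact (Int.natCast_dvd_natCast.2 h).trans hs

theorem exists_period_on_block [Finite A] {γ : ℕ} (hγ : 0 < γ)
    (hmem : (γ : ℤ) ∈ blockStabilizer hℓ θ n) (hv : v ∈ Y) :
    ∃ u ∈ Y, ∃ t : ℕ, 0 < t ∧ t ≤ γ * Nat.card A ∧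
      ∀ m ∈ Ico 0 ((ℓ : ℤ) ^ n), Θ^[n] u (m + t) = Θ^[n] u m := by
  have hshift (k : ℕ) : ∃ u ∈ Y, Θ^[n] u = zshift (k * γ) (Θ^[n] v) :=
    exists_eq_zshift_of_mem_blockStabilizer (by simpa using AddSubgroup.nsmul_mem _ hmem k) hv
  choose u hu huv using hshift
  have := Fintype.ofFinite A
  obtain ⟨i, k, hne, hik⟩ := Fintype.exists_ne_map_eq_of_card_lt
    (fun k : Fin (Nat.card A + 1) => u k 0) (by simp [Nat.card_eq_fintype_card])
  wlog hlt : i < k generalizing i k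
  · exact this k i hne.symm hik.symm (hne.symm.lt_of_le (not_lt.1 hlt))
  obtain ⟨c, hc⟩ : ∃ c, (k : ℕ) = i + c := Nat.exists_eq_add_of_le hlt.le
  refine ⟨u i, hu i, γ * c, Nat.mul_pos hγ (by omega), Nat.mul_le_mul_left _ (by omega),
    fun m hm => ?_⟩
  rw [iterate_substApply_apply_eq_of_lt hik hm.1 hm.2, huv, huv, hc, zshift_apply, zshift_apply]
  push_cast
  ring_nf

section Periodic

variable [TopologicalSpace A] [DiscreteTopology A] [Finite A]

theorem exists_block_length_forcing_periodic (hprim : IsPrimitive hℓ θ) :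
    ∃ B : ℕ, ∀ (j t : ℕ), t ≤ ℓ ^ j → ∀ u ∈ Y,
      (∀ m ∈ Ico 0 ((ℓ : ℤ) ^ j * B), Θ^[j] u (m + t) = Θ^[j] u m) →
        ∀ y ∈ Y, Function.Periodic y t := by
  obtain ⟨R, hR⟩ := exists_uniform_recurrence hprim 1
  refine ⟨2 * R + 1, fun j t ht u hu hwindow y hy m => ?_⟩
  obtain ⟨κ, _, ⟨v, hv, rfl⟩, rfl⟩ := mem_iUnion.1 (legalShift_subset_iUnion hprim j hy)
  have hpos : (0 : ℤ) < ℓ ^ j := by exact_mod_cast pow_pos hℓ j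
  have : (t : ℤ) ≤ ℓ ^ j := by exact_mod_cast ht
  set q := (m + κ) / (ℓ : ℤ) ^ j
  set s := (m + κ) % (ℓ : ℤ) ^ j
  have hqs : (ℓ : ℤ) ^ j * q + s = m + κ := Int.mul_ediv_add_emod _ _
  have hs₀ : 0 ≤ s := Int.emod_nonneg _ hpos.ne'
  have hs : s < ℓ ^ j := Int.emod_lt_of_pos _ hpos
  obtain ⟨k, hk, huv⟩ := hR _ (zshift_mem_legalShift hv q) _ (zshift_mem_legalShift hu R)
  obtain ⟨hk₁, hk₂⟩ := abs_le.1 hk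
  -- The positions `m` and `m + t` lie in the images of the two letters of `v` at `q` and `q + 1`,
  -- a word that reappears in `u` at `k + R`.
  have hcopy (r : ℤ) (hr₀ : 0 ≤ r) (hr : r < 2 * ℓ ^ j) :
      Θ^[j] v (ℓ ^ j * q + r) = Θ^[j] u (ℓ ^ j * (k + R) + r) := by
    have hletter : r / (ℓ : ℤ) ^ j ∈ Icc (-(1 : ℕ) : ℤ) (1 : ℕ) :=
      ⟨by linarith [Int.ediv_nonneg hr₀ hpos.le, show ((1 : ℕ) : ℤ) = 1 from rfl],
        Int.lt_add_one_iff.1 ((Int.ediv_lt_iff_lt_mul hpos).2 (by simpa using hr))⟩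
    have := iterate_substApply_apply_eq (hℓ := hℓ) (θ := θ) (huv hletter)
    simpa [iterate_substApply_zshift, mul_add, add_comm, add_left_comm] using this
  have hkR : (ℓ : ℤ) ^ j * (k + R) ≤ ℓ ^ j * (2 * R) := by gcongr; linarith
  have hshift := hwindow (ℓ ^ j * (k + R) + s) ⟨by nlinarith, by push_cast; nlinarith⟩
  rw [add_assoc, ← hcopy s hs₀ (by linarith), ← hcopy (s + t) (by omega) (by linarith)] at hshift
  rwa [← add_assoc, hqs, add_right_comm] at hshift

theorem exists_periodic_of_mem_blockStabilizer (hprim : IsPrimitive hℓ θ) (hlt : 1 < ℓ)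
    (hY : (Y).Nonempty) {d : ℤ} (hd : d ∈ blockStabilizer hℓ θ 1) (hdvd : ¬(ℓ : ℤ) ∣ d) :
    ∃ t : ℕ, 0 < t ∧ ∀ y ∈ Y, Function.Periodic y t := by
  obtain ⟨B, hB⟩ := exists_block_length_forcing_periodic hprim
  set c := Nat.card A
  -- `j` is chosen so that `γ ≤ ℓ^(j+B+1) / 2^(j+B)` gives `γ * c ≤ ℓ^j * (j / 2^(j+B)) ≤ ℓ^j`.
  set j := c * ℓ ^ (B + 1) with hj
  obtain ⟨s, hs, hsdvd⟩ := exists_mem_blockStabilizer_succ hprim hY hd hdvd (j + B)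
  obtain ⟨γ, hγ, hmem, hle⟩ :=
    exists_pos_mem_mul_two_pow_le hℓ (pow_mem_blockStabilizer _) hs hsdvd
  obtain ⟨v, hv⟩ := hY
  obtain ⟨u, hu, t, ht, htγ, hperiod⟩ := exists_period_on_block hγ hmem hv
  have htj : t ≤ ℓ ^ j := by
    refine Nat.le_of_mul_le_mul_right (c := 2 ^ (j + B)) ?_ (by positivity)
    calc t * 2 ^ (j + B) ≤ γ * c * 2 ^ (j + B) := by gcongr
      _ = γ * 2 ^ (j + B) * c := by ring
      _ ≤ ℓ ^ (j + B + 1) * c := by gcongr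
      _ = ℓ ^ j * j := by rw [hj]; ring
      _ ≤ ℓ ^ j * 2 ^ (j + B) := by
        gcongr
        exact Nat.lt_two_pow_self.le.trans (Nat.pow_le_pow_right two_pos (Nat.le_add_right j B))
  have hBle : B ≤ ℓ ^ (B + 1) := (Nat.lt_pow_self hlt).le.trans (Nat.pow_le_pow_right hℓ B.le_succ)
  refine ⟨t, ht, hB j t htj _ (iterate_substApply_mem_legalShift hu (B + 1)) fun m hm => ?_⟩
  rw [← Function.iterate_add_apply]
  refine hperiod m ⟨hm.1, hm.2.trans_le ?_⟩
  rw [add_assoc, pow_add]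
  gcongr
  exact_mod_cast hBle

end Periodic

end Recognizability

section Aperiodic

theorem exists_iterate_substApply_const (hprim : IsPrimitive hℓ θ) (hc : 0 < cMin θ)
    (hY : (Y).Nonempty) {t : ℕ} (ht : 0 < t) (hper : ∀ y ∈ Y, Function.Periodic y t) :
    ∃ n, ∀ w w' : ℤ → A, Θ^[n] w = Θ^[n] w' := by
  obtain ⟨n, hn⟩ := exists_pow_lt_of_lt_one (inv_pos.2 (by exact_mod_cast ht : (0 : ℝ) < t))
    (contractionRatio_lt_one hℓ hc)
  have hconst {v v' : ℤ → A} (hv : v ∈ Y) (hv' : v' ∈ Y) : Θ^[n] v = Θ^[n] v' :=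
    eq_of_periodic_of_besD1_lt ht (hper _ (iterate_substApply_mem_legalShift hv n))
      (hper _ (iterate_substApply_mem_legalShift hv' n))
      ((besD1_iterate_substApply_le v v' n).trans_lt hn)
  obtain ⟨y, hy⟩ := hY
  refine ⟨n, fun w w' => funext fun m => ?_⟩
  obtain ⟨k, hk⟩ := exists_apply_eq_of_mem_legalShift hprim hy (w (m / ℓ ^ n))
  obtain ⟨k', hk'⟩ := exists_apply_eq_of_mem_legalShift hprim hy (w' (m / ℓ ^ n))
  have hcopy {z : ℤ → A} {l : ℤ} (h : y l = z (m / ℓ ^ n)) :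
      Θ^[n] (zshift (l - m / ℓ ^ n) y) m = Θ^[n] z m :=
    iterate_substApply_apply_eq (by simpa using h)
  rw [← hcopy hk, ← hcopy hk',
    hconst (zshift_mem_legalShift hy _) (zshift_mem_legalShift hy _)]

variable [TopologicalSpace A] [T1Space A] {x₀ : ℤ → A}

theorem orbitClosure_finite_of_zshift_eq {m : ℕ} (hm : 0 < m) (h : zshift m x₀ = x₀) :
    (orbitClosure x₀).Finite := by
  have hperiod (k : ℤ) : zshift (m * k) x₀ = x₀ := by
    induction k with
    | zero => simp
    | succ k ih => rw [mul_add, ← zshift_zshift, mul_one, h, ih]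
    | pred k ih =>
      conv_lhs => rw [← h]
      rw [zshift_zshift, ← ih]
      congr 1
      ring
  have horbit : (range fun k => zshift k x₀).Finite := by
    refine ((finite_Ico (0 : ℤ) m).image fun k => zshift k x₀).subset ?_
    rintro _ ⟨k, rfl⟩
    have hm' : (0 : ℤ) < m := by exact_mod_cast hm
    refine ⟨k % m, ⟨Int.emod_nonneg k hm'.ne', Int.emod_lt_of_pos k hm'⟩, ?_⟩
    change zshift _ _ = zshift _ _
    conv_lhs => rw [← hperiod (k / m), zshift_zshift, Int.emod_add_mul_ediv]
  rw [orbitClosure_eq_closure_range, horbit.isClosed.closure_eq]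
  exact horbit

theorem orbitClosure_finite_of_periodic (hprim : IsPrimitive hℓ θ) (hc : 0 < cMin θ)
    (hY : (Y).Nonempty) (hper : x₀ ∈ Function.periodicPts Θ) {t : ℕ} (ht : 0 < t)
    (hperiodic : ∀ y ∈ Y, Function.Periodic y t) : (orbitClosure x₀).Finite := by
  obtain ⟨n, hn⟩ := exists_iterate_substApply_const hprim hc hY ht hperiodic
  obtain ⟨w, rfl⟩ := exists_iterate_substApply_eq hper n
  refine orbitClosure_finite_of_zshift_eq (m := ℓ ^ n) (pow_pos hℓ n) ?_
  rw [Nat.cast_pow, ← mul_one ((ℓ : ℤ) ^ n), ← iterate_substApply_zshift]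
  exact hn _ _

end Aperiodic

section Attractor

variable [TopologicalSpace A] [DiscreteTopology A] [Finite A] {x₀ x y : ℤ → A} {i j : ℕ}

theorem sub_mem_blockStabilizer_of_besD1_eq_zero (hprim : IsPrimitive hℓ θ) (hx : x ∈ Y)
    (hy : y ∈ Y) (h : besD1 (zshift i (Θ x)) (zshift j (Θ y)) = 0) :
    (i - j : ℤ) ∈ blockStabilizer hℓ θ 1 := by
  have hcell {z : ℤ → A} (hz : z ∈ Y) (i k : ℕ) :
      zshift (ℓ * k) (zshift i (Θ z)) ∈ zshift i '' (Θ^[1] '' Y) :=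
    ⟨_, mem_image_of_mem _ (zshift_mem_legalShift hz k),
      by simp [substApply_zshift, add_comm]⟩
  have hinter : ¬Disjoint (zshift i '' (Θ^[1] '' Y)) (zshift j '' (Θ^[1] '' Y)) := fun hdisj =>
    (besD1_pos_of_disjoint (isCompact_zshift_image_iterate_substApply i 1)
      (isCompact_zshift_image_iterate_substApply j 1) hdisj hℓ (hcell hx i) (hcell hy j)).ne' h
  obtain ⟨_, ⟨_, ⟨v, hv, rfl⟩, rfl⟩, _, ⟨w, hw, rfl⟩, hwv⟩ := not_disjoint_iff.1 hinter
  refine mem_blockStabilizer_of_eq hprim hv hw ?_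
  rw [sub_eq_neg_add, ← zshift_zshift, ← hwv, zshift_zshift, neg_add_cancel, zshift_zero]

theorem besD1_zshift_substApply_ne_zero (hprim : IsPrimitive hℓ θ) (hc : 0 < cMin θ)
    (hlt : 1 < ℓ) (hper : x₀ ∈ Function.periodicPts Θ) (hinf : (orbitClosure x₀).Infinite)
    (hi : i < ℓ) (hj : j < ℓ) (hij : i ≠ j) (hx : x ∈ orbitClosure x₀) (hy : y ∈ orbitClosure x₀) :
    besD1 (zshift i (Θ x)) (zshift j (Θ y)) ≠ 0 := by
  obtain ⟨x', hx', hxx'⟩ := exists_mem_legalShift_eventuallyEq hprim hlt hper hx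
  obtain ⟨y', hy', hyy'⟩ := exists_mem_legalShift_eventuallyEq hprim hlt hper hy
  rw [← besD1_congr (eventuallyEq_zshift (eventuallyEq_substApply hxx') i)
    (eventuallyEq_zshift (eventuallyEq_substApply hyy') j)]
  intro h
  have hdvd : ¬(ℓ : ℤ) ∣ i - j := fun h =>
    hij (by simpa [sub_eq_zero] using Int.eq_zero_of_abs_lt_dvd h (abs_lt.2 ⟨by omega, by omega⟩))
  obtain ⟨t, ht, hperiodic⟩ := exists_periodic_of_mem_blockStabilizer hprim hlt ⟨x', hx'⟩
    (sub_mem_blockStabilizer_of_besD1_eq_zero hprim hx' hy' h) hdvd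
  exact hinf (orbitClosure_finite_of_periodic hprim hc ⟨x', hx'⟩ hper ht hperiodic)

theorem exists_mem_orbitClosure_tendsto_subseq (hprim : IsPrimitive hℓ θ) (hc : 0 < cMin θ)
    (hlt : 1 < ℓ) (hper : x₀ ∈ Function.periodicPts Θ) {u : ℕ → ℤ → A}
    (hu : ∀ k, u k ∈ orbitClosure x₀) :
    ∃ z ∈ orbitClosure x₀, ∃ φ : ℕ → ℕ, StrictMono φ ∧
      Tendsto (fun k => besD1 (u (φ k)) z) atTop (𝓝 0) := by
  choose v hv hvu using fun k => exists_mem_legalShift_eventuallyEq hprim hlt hper (hu k)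
  obtain ⟨z, hz, φ, hφ, hlim⟩ := exists_besD1_tendsto_subseq hprim hc hv
  exact ⟨z, legalShift_subset_orbitClosure hprim hper hz, φ, hφ,
    hlim.congr fun k => besD1_congr (hvu (φ k)) EventuallyEq.rfl⟩

theorem exists_besD1_zshift_substApply_eq_zero (hprim : IsPrimitive hℓ θ) (hlt : 1 < ℓ)
    (hper : x₀ ∈ Function.periodicPts Θ) (hx : x ∈ orbitClosure x₀) :
    ∃ i < ℓ, ∃ y ∈ orbitClosure x₀, besD1 x (zshift i (Θ y)) = 0 := by
  obtain ⟨x', hx', hxx'⟩ := exists_mem_legalShift_eventuallyEq hprim hlt hper hx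
  obtain ⟨i, hi, y, hy, rfl⟩ := exists_eq_zshift_substApply hprim hx'
  exact ⟨i, hi, y, legalShift_subset_orbitClosure hprim hper hy,
    besD1_eq_zero_of_eventuallyEq hxx'.symm⟩

theorem exists_mem_orbitClosure_besD1_eq_zero (hprim : IsPrimitive hℓ θ) (hlt : 1 < ℓ)
    (hper : x₀ ∈ Function.periodicPts Θ) (i : ℕ) (hy : y ∈ orbitClosure x₀) :
    ∃ x ∈ orbitClosure x₀, besD1 (zshift i (Θ y)) x = 0 := by
  obtain ⟨y', hy', hyy'⟩ := exists_mem_legalShift_eventuallyEq hprim hlt hper hy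
  exact ⟨zshift i (Θ y'), legalShift_subset_orbitClosure hprim hper
      (zshift_mem_legalShift (iterate_substApply_mem_legalShift hy' 1) i),
    besD1_eq_zero_of_eventuallyEq (eventuallyEq_zshift (eventuallyEq_substApply hyy'.symm) i)⟩

end Attractor

end ConstantLengthSubstitution

theorem substitution_IFS_strong_separation_attractor_general
    {A : Type*} [Finite A] [TopologicalSpace A] [DiscreteTopology A]
    {ℓ : ℕ} (hℓ : 0 < ℓ) (θ : A → Fin ℓ → A) (hprim : IsPrimitive hℓ θ)
    (x₀ : ℤ → A) (p : ℕ) (hp : 1 ≤ p) (hper : (substApply hℓ θ)^[p] x₀ = x₀)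
    (hinf : (orbitClosure x₀).Infinite)
    (hc : 0 < cMin θ) :
    (∀ i < ℓ, ∃ r : ℝ, r < 1 ∧ ∀ x y : ℤ → A,
        besD1 (shift^[i] (substApply hℓ θ x)) (shift^[i] (substApply hℓ θ y)) ≤
          r * besD1 x y) ∧
    (∀ u : ℕ → ℤ → A, (∀ k, u k ∈ orbitClosure x₀) →
        ∃ z ∈ orbitClosure x₀, ∃ φ : ℕ → ℕ, StrictMono φ ∧
          Filter.Tendsto (fun k => besD1 (u (φ k)) z) Filter.atTop (𝓝 (0 : ℝ))) ∧
    (∀ i < ℓ, ∀ j < ℓ, i ≠ j → ∀ x ∈ orbitClosure x₀, ∀ y ∈ orbitClosure x₀,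
        besD1 (shift^[i] (substApply hℓ θ x)) (shift^[j] (substApply hℓ θ y)) ≠ 0) ∧
    (∀ x ∈ orbitClosure x₀, ∃ i < ℓ, ∃ y ∈ orbitClosure x₀,
        besD1 x (shift^[i] (substApply hℓ θ y)) = 0) ∧
    (∀ i < ℓ, ∀ y ∈ orbitClosure x₀, ∃ x ∈ orbitClosure x₀,
        besD1 (shift^[i] (substApply hℓ θ y)) x = 0) := by
  have hperiodic : x₀ ∈ Function.periodicPts (substApply hℓ θ) := ⟨p, hp, hper⟩
  have := nontrivial_of_cMin_pos hc
  have hlt : 1 < ℓ := hprim.one_lt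
  simp only [iterate_shift]
  refine ⟨fun i _ => ⟨contractionRatio θ, contractionRatio_lt_one hℓ hc, fun x y => ?_⟩,
    fun u hu => exists_mem_orbitClosure_tendsto_subseq hprim hc hlt hperiodic hu,
    fun i hi j hj hij x hx y hy =>
      besD1_zshift_substApply_ne_zero hprim hc hlt hperiodic hinf hi hj hij hx hy,
    fun x hx => exists_besD1_zshift_substApply_eq_zero hprim hlt hperiodic hx,
    fun i _ y hy => exists_mem_orbitClosure_besD1_eq_zero hprim hlt hperiodic i hy⟩
  rw [besD1_zshift_natCast]
  exact besD1_substApply_le x y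

/-- If `X_θ` is infinite, has discrete spectrum and `c(θ) > 0`, then
`{σ^i ∘ θ}_{0 ≤ i < ℓ}` is an iterated function system on the Besicovitch space
`([Σ],D_1)` (all maps are contractions), the set `[X_θ]` is compact (sequentially
compact with respect to `D_1`), the images `(σ^i∘θ)([X_θ])` are pairwise disjoint,
and `[X_θ] = ⋃_{i<ℓ} (σ^i∘θ)([X_θ])`: the IFS satisfies the strong separation
condition and its attractor is `[X_θ]`. -/
theorem substitution_IFS_strong_separation_attractor
    {A : Type} [Fintype A] [TopologicalSpace A] [DiscreteTopology A]
    [MeasurableSpace A] [MeasurableSingletonClass A]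
    {ℓ : ℕ} (hℓ : 0 < ℓ) (θ : A → Fin ℓ → A) (hprim : IsPrimitive hℓ θ)
    (x₀ : ℤ → A) (p : ℕ) (hp : 1 ≤ p) (hper : (substApply hℓ θ)^[p] x₀ = x₀)
    (hinf : (orbitClosure x₀).Infinite)
    (hds : HasDiscreteSpectrum (orbitClosure x₀))
    (hc : 0 < cMin θ) :
    (∀ i < ℓ, ∃ r : ℝ, r < 1 ∧ ∀ x y : ℤ → A,
        besD1 (shift^[i] (substApply hℓ θ x)) (shift^[i] (substApply hℓ θ y)) ≤
          r * besD1 x y) ∧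
    (∀ u : ℕ → ℤ → A, (∀ k, u k ∈ orbitClosure x₀) →
        ∃ z ∈ orbitClosure x₀, ∃ φ : ℕ → ℕ, StrictMono φ ∧
          Filter.Tendsto (fun k => besD1 (u (φ k)) z) Filter.atTop (𝓝 (0 : ℝ))) ∧
    (∀ i < ℓ, ∀ j < ℓ, i ≠ j → ∀ x ∈ orbitClosure x₀, ∀ y ∈ orbitClosure x₀,
        besD1 (shift^[i] (substApply hℓ θ x)) (shift^[j] (substApply hℓ θ y)) ≠ 0) ∧
    (∀ x ∈ orbitClosure x₀, ∃ i < ℓ, ∃ y ∈ orbitClosure x₀,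
        besD1 x (shift^[i] (substApply hℓ θ y)) = 0) ∧
    (∀ i < ℓ, ∀ y ∈ orbitClosure x₀, ∃ x ∈ orbitClosure x₀,
        besD1 (shift^[i] (substApply hℓ θ y)) x = 0) := by
  exact substitution_IFS_strong_separation_attractor_general hℓ θ hprim x₀ p hp hper hinf hc
end
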